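/- arXiv:math/0409228 — 3 statements merged into one kernel-verified Lean document; each statement's English description precedes it below -/
import Mathlib

section
/- Let G be a graph with minimum degree at least 2 that has no 2-factor. Then there exist disjoint subsets S, T of V(G), with O the union of vertex sets of components of G−S−T having an odd number of edges into T and R = V−S−T−O, such that: (i) T is independent; (ii) there are no edges between R and O ∪ T; (iii) every component of G⟨O⟩ has an odd number of edges into T; (iv) no vertex t ∈ T has two edges into the same component of G⟨O⟩; (v) every o ∈ O has at most one edge into T; (vi) there is no edge ot with t ∈ T, o ∈ O such that t has no edge into S and o has no edge into O; and (vii) |T| − |S| − (e(T,O) − oc(S,T))/2 > 0, where oc(S,T) is the number of components of G−S−T with an odd number of edges into T. -/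
/-- The union of all pairwise common neighborhoods of distinct members of `S` in `G`. -/
def commonUnionG {V : Type*} (G : SimpleGraph V) (S : Set V) : Set V :=
  {w | ∃ u ∈ S, ∃ v ∈ S, u ≠ v ∧ G.Adj u w ∧ G.Adj v w}

/-- A graph is s-quadrangular if for every set `S` of at least two vertices in
which every member shares a neighbor with another member, the union of all
pairwise common neighborhoods has size at least `|S|`. -/
def SQuadG {V : Type*} (G : SimpleGraph V) : Prop :=
  ∀ S : Set V, 2 ≤ S.ncard →
    (∀ u ∈ S, ∃ v ∈ S, v ≠ u ∧ (G.neighborSet u ∩ G.neighborSet v).Nonempty) →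
    S.ncard ≤ (commonUnionG G S).ncard

/-- `eCnt G X Y` counts the edges of `G` with one endpoint in `X` and the
other in `Y` (for disjoint `X`, `Y`; encoded as ordered adjacent pairs). -/
noncomputable def eCnt {V : Type*} (G : SimpleGraph V) (X Y : Set V) : ℕ :=
  {p : V × V | p.1 ∈ X ∧ p.2 ∈ Y ∧ G.Adj p.1 p.2}.ncard

/-- Reachability inside the vertex set `W`, i.e. in the induced subgraph `G⟨W⟩`. -/
def ReachIn {V : Type*} (G : SimpleGraph V) (W : Set V) (a b : V) : Prop :=
  Relation.ReflTransGen (fun x y => x ∈ W ∧ y ∈ W ∧ G.Adj x y) a b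

/-- The vertex set of the connected component of `v` in the induced subgraph `G⟨W⟩`. -/
def compIn {V : Type*} (G : SimpleGraph V) (W : Set V) (v : V) : Set V :=
  {u | ReachIn G W v u}

section Components

variable {V : Type*} {G : SimpleGraph V} {W W' : Set V} {a b : V}

lemma mem_compIn_self (G : SimpleGraph V) (W : Set V) (a : V) : a ∈ compIn G W a :=
  Relation.ReflTransGen.refl

lemma ReachIn.symm (h : ReachIn G W a b) : ReachIn G W b a := by
  induction h with
  | refl => exact Relation.ReflTransGen.refl
  | tail _ h ih => exact Relation.ReflTransGen.head ⟨h.2.1, h.1, h.2.2.symm⟩ ih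

lemma compIn_eq_of_mem (h : b ∈ compIn G W a) : compIn G W b = compIn G W a :=
  Set.ext fun _ => ⟨fun hc => Relation.ReflTransGen.trans h hc,
    fun hc => Relation.ReflTransGen.trans (ReachIn.symm h) hc⟩

lemma compIn_subset (ha : a ∈ W) : compIn G W a ⊆ W := by
  intro b hb
  induction hb with
  | refl => exact ha
  | tail _ h _ => exact h.2.1

lemma mem_compIn_of_adj {c : V} (hb : b ∈ compIn G W a) (hbW : b ∈ W) (hcW : c ∈ W)
    (h : G.Adj b c) : c ∈ compIn G W a :=
  Relation.ReflTransGen.tail hb ⟨hbW, hcW, h⟩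

lemma compIn_eq_of_adj (ha : a ∈ W) (hb : b ∈ W) (h : G.Adj a b) :
    compIn G W b = compIn G W a :=
  compIn_eq_of_mem (mem_compIn_of_adj (mem_compIn_self G W a) ha hb h)

/-- A set containing `a`, closed under adjacency within `W`, contains the component of `a`. -/
lemma compIn_subset_of_closed {C : Set V} (ha : a ∈ C)
    (hcl : ∀ x ∈ C, x ∈ W → ∀ y ∈ W, G.Adj x y → y ∈ C) : compIn G W a ⊆ C := by
  intro b hb
  induction hb with
  | refl => exact ha
  | tail _ h ih => exact hcl _ ih h.1 _ h.2.1 h.2.2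

/-- A component of `G⟨W⟩` contained in `W'` and without neighbours in the rest of `W'` is a
component of `G⟨W'⟩`. -/
lemma compIn_eq_compIn (hsub : compIn G W a ⊆ W')
    (hcl : ∀ x ∈ compIn G W a, ∀ y ∈ W', G.Adj x y → y ∈ compIn G W a) :
    compIn G W' a = compIn G W a := by
  refine (compIn_subset_of_closed (mem_compIn_self G W a)
    fun x hx _ y hy hxy => hcl x hx y hy hxy).antisymm fun b hb => ?_
  induction hb with
  | refl => exact mem_compIn_self G W' a
  | tail hb h ih =>
    exact mem_compIn_of_adj ih (hsub hb) (hsub (Relation.ReflTransGen.tail hb h)) h.2.2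

/-- The vertex sets of the components of `G⟨W⟩` whose weight is odd. -/
def oddComps (G : SimpleGraph V) (W : Set V) (w : Set V → ℕ) : Set (Set V) :=
  {C | ∃ v ∈ W, C = compIn G W v ∧ Odd (w C)}

variable [Fintype V]

lemma odd_ncard_oddComps_iff {w : Set V → ℕ} (f : V → ℕ)
    (hw : ∀ C, w C = ∑ v, C.indicator f v) :
    Odd (oddComps G W w).ncard ↔ Odd (w W) := by
  classical
  have hsum : w W = ∑ C ∈ W.toFinset.image (compIn G W), w C := by
    rw [hw, Finset.sum_indicator_eq_sum_filter]
    rw [← Finset.sum_fiberwise_of_maps_to (g := compIn G W)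
      (t := W.toFinset.image (compIn G W))]
    · refine Finset.sum_congr rfl fun C hC => ?_
      rw [hw, Finset.sum_indicator_eq_sum_filter]
      refine Finset.sum_congr ?_ fun _ _ => rfl
      ext x
      obtain ⟨v, hv, rfl⟩ := Finset.mem_image.1 hC
      rw [Set.mem_toFinset] at hv
      simp only [Finset.mem_filter, Finset.mem_univ, true_and]
      constructor
      · rintro ⟨-, h⟩
        rw [← h]
        exact mem_compIn_self G W x
      · exact fun h => ⟨compIn_subset hv h, compIn_eq_of_mem h⟩
    · intro x hx
      simp only [Finset.mem_filter, Finset.mem_univ, true_and] at hx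
      exact Finset.mem_image_of_mem _ (Set.mem_toFinset.2 hx)
  rw [hsum, Finset.odd_sum_iff_odd_card_odd, ← Set.ncard_coe_finset]
  congr! 2
  ext C
  simp only [oddComps, Set.mem_ofPred_eq, Finset.coe_filter, Finset.mem_image, Set.mem_toFinset]
  constructor
  · rintro ⟨v, hv, rfl, h⟩
    exact ⟨⟨v, hv, rfl⟩, h⟩
  · rintro ⟨⟨v, hv, rfl⟩, h⟩
    exact ⟨v, hv, rfl, h⟩

/-- Enlarging `W` by a vertex `x` destroys only the odd components having a neighbour of `x`,
as long as the weights of the other components do not change. -/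
lemma ncard_oddComps_le_add (x : V) {w w' : Set V → ℕ} (hW' : W' ⊆ insert x W)
    (hw : ∀ C ∈ oddComps G W w, (∀ y ∈ C, ¬ G.Adj x y) → C ⊆ W' ∧ w' C = w C) :
    (oddComps G W w).ncard ≤ (oddComps G W' w').ncard +
      (compIn G W '' {y ∈ G.neighborSet x | y ∈ W ∧ Odd (w (compIn G W y))}).ncard := by
  refine (Set.ncard_le_ncard ?_).trans (Set.ncard_union_le _ _)
  intro C hC
  by_cases h : ∃ y ∈ C, G.Adj x y
  · right
    obtain ⟨y, hyC, hxy⟩ := h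
    obtain ⟨v, hv, rfl, hodd⟩ := hC
    have hy := compIn_eq_of_mem hyC
    exact ⟨y, ⟨hxy, compIn_subset hv hyC, hy ▸ hodd⟩, hy⟩
  · left
    push Not at h
    obtain ⟨hCW', hww'⟩ := hw C hC h
    obtain ⟨v, hv, rfl, hodd⟩ := hC
    refine ⟨v, hCW' (mem_compIn_self G W v), ?_, hww' ▸ hodd⟩
    refine (compIn_eq_compIn hCW' fun a ha b hb hab => ?_).symm
    rcases hW' hb with rfl | hb
    · exact absurd hab.symm (h a ha)
    · exact mem_compIn_of_adj ha (compIn_subset hv ha) hb hab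

/-- Removing a vertex `x` from `W` destroys at most one odd component. -/
lemma ncard_oddComps_le_succ (x : V) {w : Set V → ℕ} :
    (oddComps G W w).ncard ≤ (oddComps G (W \ {x}) w).ncard + 1 := by
  rw [← Set.ncard_singleton (compIn G W x)]
  refine (Set.ncard_le_ncard ?_).trans (Set.ncard_union_le _ _)
  rintro C ⟨v, hv, rfl, hodd⟩
  by_cases h : x ∈ compIn G W v
  · exact Or.inr (compIn_eq_of_mem h).symm
  · have hsub : compIn G W v ⊆ W \ {x} := fun y hy =>
      ⟨compIn_subset hv hy, fun hyx => h (hyx ▸ hy)⟩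
    refine Or.inl ⟨v, hsub (mem_compIn_self G W v), ?_, hodd⟩
    exact (compIn_eq_compIn hsub fun a ha b hb hab =>
      mem_compIn_of_adj ha (compIn_subset hv ha) hb.1 hab).symm

end Components

section EdgeCount

variable {V : Type*} (G : SimpleGraph V)

lemma eCnt_comm (X Y : Set V) : eCnt G X Y = eCnt G Y X := by
  unfold eCnt
  rw [← Set.ncard_image_of_injective _ Prod.swap_injective]
  congr 1
  ext ⟨a, b⟩
  simp [Set.image_swap_eq_preimage_swap, G.adj_comm, and_left_comm]

lemma eCnt_empty_left (Y : Set V) : eCnt G ∅ Y = 0 := by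
  simp [eCnt]

lemma eCnt_singleton_left (v : V) (Y : Set V) :
    eCnt G {v} Y = (G.neighborSet v ∩ Y).ncard := by
  unfold eCnt
  rw [← Set.ncard_image_of_injective (G.neighborSet v ∩ Y) (Prod.mk_right_injective v)]
  congr 1
  ext ⟨a, b⟩
  simp only [Set.mem_ofPred_eq, Set.mem_singleton_iff, Set.mem_image, Set.mem_inter_iff,
    SimpleGraph.mem_neighborSet, Prod.mk.injEq]
  constructor
  · rintro ⟨rfl, hb, h⟩
    exact ⟨b, ⟨h, hb⟩, rfl, rfl⟩
  · rintro ⟨_, ⟨h, hb⟩, rfl, rfl⟩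
    exact ⟨rfl, hb, h⟩

variable {G} in
lemma eCnt_eq_of_forall_adj_iff {X Y Y' : Set V}
    (h : ∀ x ∈ X, ∀ y, G.Adj x y → (y ∈ Y ↔ y ∈ Y')) : eCnt G X Y = eCnt G X Y' := by
  unfold eCnt
  congr 1
  ext ⟨a, b⟩
  simp only [Set.mem_ofPred_eq]
  constructor
  · rintro ⟨ha, hb, hab⟩
    exact ⟨ha, (h a ha b hab).1 hb, hab⟩
  · rintro ⟨ha, hb, hab⟩
    exact ⟨ha, (h a ha b hab).2 hb, hab⟩

variable [Fintype V]

lemma eCnt_union_left {X X' : Set V} (h : Disjoint X X') (Y : Set V) :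
    eCnt G (X ∪ X') Y = eCnt G X Y + eCnt G X' Y := by
  unfold eCnt
  rw [← Set.ncard_union_eq]
  · congr 1
    ext ⟨a, b⟩
    simp only [Set.mem_union, Set.mem_ofPred_eq]
    tauto
  · rw [Set.disjoint_left] at h ⊢
    exact fun p hp hp' => h hp.1 hp'.1

lemma eCnt_union_right (X : Set V) {Y Y' : Set V} (h : Disjoint Y Y') :
    eCnt G X (Y ∪ Y') = eCnt G X Y + eCnt G X Y' := by
  rw [eCnt_comm, eCnt_union_left G h, eCnt_comm G Y, eCnt_comm G Y']

lemma eCnt_eq_sum (X Y : Set V) :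
    eCnt G X Y = ∑ v, X.indicator (fun v => eCnt G {v} Y) v := by
  classical
  induction X, X.toFinite using Set.Finite.induction_on with
  | empty => simp [eCnt_empty_left]
  | @insert a X ha _ ih =>
    have hd : Disjoint {a} X := Set.disjoint_singleton_left.2 ha
    rw [Set.insert_eq, eCnt_union_left G hd, ih, Set.indicator_union_of_disjoint hd,
      Finset.sum_add_distrib]
    congr 1
    simp [Set.indicator_apply]

variable {G} in
lemma eCnt_sdiff_singleton_left {X : Set V} {a : V} (ha : a ∈ X) (Y : Set V) :
    eCnt G X Y = eCnt G (X \ {a}) Y + eCnt G {a} Y := by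
  rw [← eCnt_union_left G Set.disjoint_sdiff_left, Set.sdiff_union_of_subset (by simpa using ha)]

lemma even_ncard_of_involution {α : Type*} [Finite α] {A : Set α} (σ : α → α)
    (hmem : ∀ a ∈ A, σ a ∈ A) (hne : ∀ a ∈ A, σ a ≠ a) (hinv : ∀ a ∈ A, σ (σ a) = a) :
    Even A.ncard := by
  classical
  have := Fintype.ofFinite α
  rw [Set.ncard_eq_toFinset_card', ← ZMod.natCast_eq_zero_iff_even,
    Finset.cast_card]
  exact Finset.sum_involution (fun a _ => σ a) (fun _ _ => by decide)
    (fun a ha _ => hne a (Set.mem_toFinset.1 ha))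
    (fun a ha => Set.mem_toFinset.2 (hmem a (Set.mem_toFinset.1 ha)))
    (fun a ha => hinv a (Set.mem_toFinset.1 ha))

lemma even_eCnt_self (X : Set V) : Even (eCnt G X X) :=
  even_ncard_of_involution Prod.swap (fun _ h => ⟨h.2.1, h.1, h.2.2.symm⟩)
    (fun _ h e => h.2.2.ne (congrArg Prod.snd e)) (fun p _ => p.swap_swap)

end EdgeCount

section Defect

variable {V : Type*} (G : SimpleGraph V) (S T : Set V)

/-- The number of components of `G − S − T` with an odd number of edges into `T`. -/
noncomputable def oddCount : ℕ :=
  (oddComps G (S ∪ T)ᶜ fun C => eCnt G C T).ncard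

/-- The difference between the two sides of Tutte's criterion for a 2-factor; a negative value
witnesses that there is none. -/
noncomputable def defect : ℤ :=
  2 * S.ncard - 2 * T.ncard + eCnt G T Sᶜ - oddCount G S T

/-- `(S, T)` minimizes lexicographically the defect, then `|T|`, then `-|S|`, then the number of
odd components. -/
structure IsOptimalPair : Prop where
  disjoint : Disjoint S T
  defect_le : ∀ S' T', Disjoint S' T' → defect G S T ≤ defect G S' T'
  ncard_right_le : ∀ S' T', Disjoint S' T' → defect G S' T' = defect G S T →
    T.ncard ≤ T'.ncard
  ncard_left_ge : ∀ S' T', Disjoint S' T' → defect G S' T' = defect G S T →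
    T'.ncard = T.ncard → S'.ncard ≤ S.ncard
  oddCount_le : ∀ S' T', Disjoint S' T' → defect G S' T' = defect G S T →
    T'.ncard = T.ncard → S'.ncard = S.ncard → oddCount G S T ≤ oddCount G S' T'

variable [Fintype V]

lemma exists_isOptimalPair : ∃ S T, IsOptimalPair G S T := by
  let key (p : Set V × Set V) : ℤ ×ₗ ℕ ×ₗ ℤ ×ₗ ℕ :=
    toLex (defect G p.1 p.2, toLex (p.2.ncard, toLex (-(p.1.ncard : ℤ), oddCount G p.1 p.2)))
  obtain ⟨⟨S, T⟩, hd, hmin⟩ := Set.exists_min_image {p : Set V × Set V | Disjoint p.1 p.2} key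
    (Set.toFinite _) ⟨(∅, ∅), disjoint_bot_left⟩
  have hmin' : ∀ S' T', Disjoint S' T' → key (S, T) ≤ key (S', T') :=
    fun S' T' h => hmin (S', T') h
  simp only [key, Prod.Lex.toLex_le_toLex'] at hmin'
  refine ⟨S, T, hd, fun S' T' h => (hmin' S' T' h).1, fun S' T' h h1 => ?_,
    fun S' T' h h1 h2 => ?_, fun S' T' h h1 h2 h3 => ?_⟩
  · exact ((hmin' S' T' h).2 h1.symm).1
  · have := (((hmin' S' T' h).2 h1.symm).2 h2.symm).1
    omega
  · exact (((hmin' S' T' h).2 h1.symm).2 h2.symm).2 (by rw [h3])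

variable {S T} {G}

lemma even_defect (h : Disjoint S T) : Even (defect G S T) := by
  have hodd : Odd (oddCount G S T) ↔ Odd (eCnt G (S ∪ T)ᶜ T) :=
    odd_ncard_oddComps_iff (fun v => eCnt G {v} T) fun C => eCnt_eq_sum G C T
  have hsplit : Sᶜ = T ∪ (S ∪ T)ᶜ := by
    ext x
    have : x ∈ S → x ∉ T := fun hx => Set.disjoint_left.1 h hx
    simp only [Set.mem_union, Set.mem_compl_iff]
    tauto
  have hd : Disjoint T (S ∪ T)ᶜ := Set.disjoint_left.2 fun x hx hx' => hx' (Or.inr hx)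
  have he : eCnt G T Sᶜ = eCnt G T T + eCnt G (S ∪ T)ᶜ T := by
    rw [hsplit, eCnt_union_right G T hd, eCnt_comm G T (S ∪ T)ᶜ]
  have := even_eCnt_self G T
  unfold defect
  rw [he]
  grind

/-- In an optimal pair, the neighbours outside `S` of a vertex of `T` lie in pairwise distinct
odd components. -/
lemma IsOptimalPair.neighbors (h : IsOptimalPair G S T) {t : V} (ht : t ∈ T) :
    (∀ y, G.Adj t y → y ∉ S → y ∈ (S ∪ T)ᶜ ∧ Odd (eCnt G (compIn G (S ∪ T)ᶜ y) T)) ∧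
    Set.InjOn (compIn G (S ∪ T)ᶜ) (G.neighborSet t ∩ Sᶜ) := by
  set W := (S ∪ T)ᶜ with hW
  set N := {y ∈ G.neighborSet t | y ∈ W ∧ Odd (eCnt G (compIn G W y) T)} with hN
  have hd' : Disjoint S (T \ {t}) := h.disjoint.mono_right Set.sdiff_subset
  have htS : t ∉ S := fun hS => Set.disjoint_left.1 h.disjoint hS ht
  have hq : oddCount G S T ≤ oddCount G S (T \ {t}) + (compIn G W '' N).ncard := by
    refine ncard_oddComps_le_add t ?_ fun C hC hCt => ⟨?_, ?_⟩
    · intro x hx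
      by_cases hxt : x = t
      · exact Or.inl hxt
      · refine Or.inr fun hx' => hx ?_
        exact hx'.imp id fun h => ⟨h, hxt⟩
    · obtain ⟨v, hv, rfl, -⟩ := hC
      exact fun x hx hx' => compIn_subset hv hx (hx'.imp id fun h => h.1)
    · refine eCnt_eq_of_forall_adj_iff fun x hx y hxy => ⟨fun h => h.1, fun h => ⟨h, ?_⟩⟩
      rintro rfl
      exact hCt x hx hxy.symm
  have hcard : (T \ {t}).ncard + 1 = T.ncard := Set.ncard_sdiff_singleton_add_one ht
  have he : eCnt G T Sᶜ = eCnt G (T \ {t}) Sᶜ + (G.neighborSet t ∩ Sᶜ).ncard := by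
    rw [eCnt_sdiff_singleton_left ht, eCnt_singleton_left]
  have hNsub : N ⊆ G.neighborSet t ∩ Sᶜ := fun y hy => ⟨hy.1, fun hS => hy.2.1 (Or.inl hS)⟩
  have hle1 : (compIn G W '' N).ncard ≤ N.ncard := Set.ncard_image_le
  have hle2 := Set.ncard_le_ncard hNsub
  have key : (G.neighborSet t ∩ Sᶜ).ncard ≤ (compIn G W '' N).ncard := by
    by_contra! hlt
    have h1 := h.defect_le S _ hd'
    have h2 := h.ncard_right_le S _ hd'
    obtain ⟨a, ha⟩ := even_defect (G := G) h.disjoint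
    obtain ⟨b, hb⟩ := even_defect (G := G) hd'
    unfold defect at *
    omega
  have hEq : N = G.neighborSet t ∩ Sᶜ := Set.eq_of_subset_of_ncard_le hNsub (by omega)
  refine ⟨fun y hy hyS => ?_, ?_⟩
  · have : y ∈ N := hEq ▸ ⟨hy, hyS⟩
    exact this.2
  · rw [← hEq]
    exact Set.injOn_of_ncard_image_eq (by rw [← hEq] at key; omega)

lemma IsOptimalPair.eCnt_le_one (h : IsOptimalPair G S T) {o : V} (ho : o ∉ S ∪ T) :
    eCnt G {o} T ≤ 1 := by
  by_contra! hlt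
  have hoS : o ∉ S := fun h => ho (Or.inl h)
  have hoT : o ∉ T := fun h => ho (Or.inr h)
  have hd' : Disjoint (insert o S) T := Set.disjoint_insert_left.2 ⟨hoT, h.disjoint⟩
  have hq : oddCount G S T ≤ oddCount G (insert o S) T + 1 := by
    have := ncard_oddComps_le_succ (G := G) (W := (S ∪ T)ᶜ) o (w := fun C => eCnt G C T)
    have hW : (insert o S ∪ T)ᶜ = (S ∪ T)ᶜ \ {o} := by
      ext x
      simp only [Set.mem_compl_iff, Set.mem_union, Set.mem_insert_iff, Set.mem_sdiff,
        Set.mem_singleton_iff]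
      tauto
    unfold oddCount
    rwa [hW]
  have hcard : (insert o S).ncard = S.ncard + 1 := Set.ncard_insert_of_notMem hoS
  have he : eCnt G T Sᶜ = eCnt G T (insert o S)ᶜ + eCnt G {o} T := by
    have : Sᶜ = (insert o S)ᶜ ∪ {o} := by
      ext x
      simp only [Set.mem_compl_iff, Set.mem_union, Set.mem_insert_iff, Set.mem_singleton_iff]
      by_cases hx : x = o
      · simp [hx, hoS]
      · simp [hx]
    rw [this, eCnt_union_right, eCnt_comm G T {o}]
    simp
  have h1 := h.defect_le _ _ hd'
  have h2 := h.ncard_left_ge _ _ hd'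
  obtain ⟨a, ha⟩ := even_defect (G := G) h.disjoint
  obtain ⟨b, hb⟩ := even_defect (G := G) hd'
  unfold defect at *
  omega

/-- In an optimal pair, an edge `to` such that `t` has no neighbour in `S` and `t` is the only
neighbour of `o` outside `S` would allow exchanging `t` and `o`. -/
lemma IsOptimalPair.ncard_neighborSet_le_one (h : IsOptimalPair G S T) {t o : V} (ht : t ∈ T)
    (ho : o ∉ S ∪ T) (hto : G.Adj t o) (htS : ∀ y, G.Adj t y → y ∉ S)
    (hoN : ∀ y, G.Adj o y → y ∉ S → y = t) : (G.neighborSet t).ncard ≤ 1 := by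
  by_contra! hlt
  have hoS : o ∉ S := fun h => ho (Or.inl h)
  have hoT : o ∉ T := fun h => ho (Or.inr h)
  have htS' : t ∉ S := fun hS => Set.disjoint_left.1 h.disjoint hS ht
  set T' := insert o (T \ {t}) with hT'
  have hoT' : o ∉ T \ {t} := fun h => hoT h.1
  have hd' : Disjoint S T' :=
    Set.disjoint_insert_right.2 ⟨hoS, h.disjoint.mono_right Set.sdiff_subset⟩
  have hcard : T'.ncard = T.ncard := by
    rw [hT', Set.ncard_insert_of_notMem hoT', Set.ncard_sdiff_singleton_add_one ht]
  have he1 : eCnt G T Sᶜ = eCnt G (T \ {t}) Sᶜ + (G.neighborSet t).ncard := by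
    rw [eCnt_sdiff_singleton_left ht, eCnt_singleton_left,
      Set.inter_eq_left.2 (show G.neighborSet t ⊆ Sᶜ from fun y hy => htS y hy)]
  have he2 : eCnt G T' Sᶜ = eCnt G (T \ {t}) Sᶜ + 1 := by
    rw [eCnt_sdiff_singleton_left (Set.mem_insert o _), Set.insert_sdiff_self_of_notMem hoT',
      eCnt_singleton_left]
    have : G.neighborSet o ∩ Sᶜ = {t} := by
      ext y
      refine ⟨fun hy => hoN y hy.1 hy.2, ?_⟩
      rintro rfl
      exact ⟨hto.symm, htS'⟩
    rw [this, Set.ncard_singleton]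
  have hq : oddCount G S T ≤ oddCount G S T' + (G.neighborSet t).ncard := by
    refine (ncard_oddComps_le_add t (W' := (S ∪ T')ᶜ) (w' := fun C => eCnt G C T') ?_
      fun C hC hCt => ?_).trans (Nat.add_le_add_left
        ((Set.ncard_image_le (Set.toFinite _)).trans
          (Set.ncard_le_ncard fun y hy => hy.1)) _)
    · intro x hx
      by_cases hxt : x = t
      · exact Or.inl hxt
      · refine Or.inr fun hx' => hx ?_
        exact hx'.imp id fun h => Or.inr ⟨h, hxt⟩
    · have hoC : o ∉ C := fun hoC => hCt o hoC hto
      obtain ⟨v, hv, rfl, -⟩ := hC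
      have hsub : compIn G (S ∪ T)ᶜ v ⊆ (S ∪ T)ᶜ := compIn_subset hv
      refine ⟨fun x hx hx' => ?_, eCnt_eq_of_forall_adj_iff fun x hx y hxy => ?_⟩
      · rcases hx' with hx' | rfl | hx'
        · exact hsub hx (Or.inl hx')
        · exact hoC hx
        · exact hsub hx (Or.inr hx'.1)
      · constructor
        · rintro (rfl | hy)
          · exact absurd (mem_compIn_of_adj hx (hsub hx) ho hxy) hoC
          · exact hy.1
        · refine fun hy => Or.inr ⟨hy, ?_⟩
          rintro rfl
          exact hCt x hx hxy.symm
  have h1 := h.defect_le _ _ hd'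
  have h2 := h.oddCount_le _ _ hd'
  obtain ⟨a, ha⟩ := even_defect (G := G) h.disjoint
  obtain ⟨b, hb⟩ := even_defect (G := G) hd'
  unfold defect at *
  omega

end Defect

section Tutte

variable {V : Type*} {G : SimpleGraph V}

lemma image_supp_deleteVerts (u : Set V) (x : ((⊤ : G.Subgraph).deleteVerts u).verts) :
    Subtype.val '' (((⊤ : G.Subgraph).deleteVerts u).coe.connectedComponentMk x).supp =
      compIn G uᶜ x := by
  ext b
  simp only [Set.mem_image, SimpleGraph.ConnectedComponent.mem_supp_iff,
    SimpleGraph.ConnectedComponent.eq, Subtype.exists, exists_and_right, exists_eq_right]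
  constructor
  · rintro ⟨hb, h⟩
    have h := h.symm
    rw [SimpleGraph.reachable_iff_reflTransGen] at h
    refine h.lift Subtype.val fun a c hac => ?_
    have hac' := SimpleGraph.Subgraph.deleteVerts_adj.1 hac
    exact ⟨hac'.2.1, hac'.2.2.2.1, hac'.2.2.2.2.adj_sub⟩
  · intro h
    induction h with
    | refl => exact ⟨x.2, .rfl⟩
    | @tail b c _ h ih =>
      obtain ⟨hb, ih⟩ := ih
      have hc : c ∈ ((⊤ : G.Subgraph).deleteVerts u).verts := ⟨trivial, h.2.1⟩
      have hbc : ((⊤ : G.Subgraph).deleteVerts u).coe.Adj ⟨b, hb⟩ ⟨c, hc⟩ :=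
        SimpleGraph.Subgraph.deleteVerts_adj.2 ⟨trivial, h.1, trivial, h.2.1, h.2.2⟩
      exact ⟨hc, hbc.symm.reachable.trans ih⟩

variable [Fintype V]

lemma SimpleGraph.IsTutteViolator.ncard_lt {u : Set V} (h : G.IsTutteViolator u) :
    u.ncard < (oddComps G uᶜ Set.ncard).ncard := by
  refine h.trans_le (Set.ncard_le_ncard_of_injOn (fun c => Subtype.val '' c.supp) ?_ ?_)
  · intro c hc
    induction c using SimpleGraph.ConnectedComponent.ind with | _ x =>
    refine ⟨x, x.2.2, image_supp_deleteVerts u x, ?_⟩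
    rw [Set.ncard_image_of_injective _ Subtype.val_injective]
    exact hc
  · intro c _ c' _ hcc'
    exact SimpleGraph.ConnectedComponent.supp_injective
      (Set.image_injective.2 Subtype.val_injective hcc')

/-- If a graph of even order has no perfect matching, some violating set `U` is such that every
vertex of `U` is adjacent to at least three components of the rest. -/
lemma exists_minimal_violator (heven : Even (Fintype.card V))
    (h : ¬ ∃ M : G.Subgraph, M.IsPerfectMatching) :
    ∃ U : Set V, U.ncard < (oddComps G Uᶜ Set.ncard).ncard ∧
      ∀ u ∈ U, 3 ≤ (compIn G Uᶜ '' (G.neighborSet u ∩ Uᶜ)).ncard := by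
  rw [SimpleGraph.tutte] at h
  push Not at h
  obtain ⟨U₀, hU₀⟩ := h
  let key (U : Set V) : ℤ ×ₗ ℕ :=
    toLex ((U.ncard : ℤ) - (oddComps G Uᶜ Set.ncard).ncard, U.ncard)
  obtain ⟨U, -, hmin⟩ := Set.exists_min_image Set.univ key Set.finite_univ ⟨∅, trivial⟩
  have hmin' : ∀ U', key U ≤ key U' := fun U' => hmin U' trivial
  simp only [key, Prod.Lex.toLex_le_toLex'] at hmin'
  have hparity : ∀ U : Set V, Even (U.ncard + (oddComps G Uᶜ Set.ncard).ncard) := by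
    intro U
    have hodd : Odd (oddComps G Uᶜ Set.ncard).ncard ↔ Odd Uᶜ.ncard := by
      classical
      refine odd_ncard_oddComps_iff (fun _ => 1) fun C => ?_
      rw [Finset.sum_indicator_eq_sum_filter, Set.ncard_eq_toFinset_card', Finset.card_eq_sum_ones]
      exact Finset.sum_congr (by ext; simp) fun _ _ => rfl
    have hcard : U.ncard + Uᶜ.ncard = Fintype.card V := by
      rw [Set.ncard_add_ncard_compl, Nat.card_eq_fintype_card]
    grind
  refine ⟨U, ?_, fun u hu => ?_⟩
  · have h0 := (hmin' U₀).1
    have := hU₀.ncard_lt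
    omega
  · by_contra! hlt
    have hcard : (U \ {u}).ncard + 1 = U.ncard := Set.ncard_sdiff_singleton_add_one hu
    have hq : (oddComps G Uᶜ Set.ncard).ncard ≤ (oddComps G (U \ {u})ᶜ Set.ncard).ncard + 2 := by
      refine (ncard_oddComps_le_add u (W' := (U \ {u})ᶜ) (w' := Set.ncard) ?_
        fun C hC _ => ⟨?_, rfl⟩).trans (Nat.add_le_add_left ((Set.ncard_le_ncard
          (t := compIn G Uᶜ '' (G.neighborSet u ∩ Uᶜ)) (Set.image_mono fun y hy =>
            ⟨hy.1, hy.2.1⟩)).trans (Nat.le_of_lt_succ hlt)) _)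
      · intro x hx
        by_cases hxu : x = u
        · exact Or.inl hxu
        · exact Or.inr fun hx' => hx ⟨hx', hxu⟩
      · obtain ⟨v, hv, rfl, -⟩ := hC
        exact fun x hx hx' => compIn_subset hv hx hx'.1
    have h1 := hmin' (U \ {u})
    obtain ⟨a, ha⟩ := hparity U
    obtain ⟨b, hb⟩ := hparity (U \ {u})
    omega

end Tutte

section Gadget

variable {V : Type*} (G : SimpleGraph V)

/-- The graph obtained from `G` by replacing every edge by a path with two inner vertices, the
darts of the edge, and duplicating the vertices of `G`. Its perfect matchings correspond to
2-factors of `G`. -/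
def gadget : SimpleGraph ((V × Bool) ⊕ G.Dart) where
  Adj
    | .inl _, .inl _ => False
    | .inl a, .inr d => d.fst = a.1
    | .inr d, .inl a => d.fst = a.1
    | .inr d, .inr e => e = d.symm
  symm := ⟨by
    rintro (a | d) (b | e) h
    · exact h
    · exact h
    · exact h
    · exact h ▸ d.symm_symm.symm⟩
  loopless := ⟨by
    rintro (a | d) h
    · exact h
    · exact d.symm_ne h.symm⟩

variable {G}

@[simp] lemma gadget_adj_inl_inl {a b : V × Bool} : ¬ (gadget G).Adj (.inl a) (.inl b) := id

lemma exists_two_factor_of_gadget (h : ∃ M : (gadget G).Subgraph, M.IsPerfectMatching) :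
    ∃ H : SimpleGraph V, H ≤ G ∧ ∀ v : V, (H.neighborSet v).ncard = 2 := by
  obtain ⟨M, hM⟩ := h
  rw [SimpleGraph.Subgraph.isPerfectMatching_iff] at hM
  let H : SimpleGraph V :=
    { Adj := fun v w => ∃ h : G.Adj v w, ¬ M.Adj (.inr ⟨(v, w), h⟩) (.inr ⟨(w, v), h.symm⟩)
      symm := ⟨fun v w ⟨h, hn⟩ => ⟨h.symm, fun h' => hn h'.symm⟩⟩
      loopless := ⟨fun v ⟨h, _⟩ => G.loopless.irrefl v h⟩ }
  refine ⟨H, fun v w h => h.1, fun v => ?_⟩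
  have hcopy : ∀ i, ∃ w, ∃ h : G.Adj v w, M.Adj (.inl (v, i)) (.inr ⟨(v, w), h⟩) := by
    intro i
    obtain ⟨x, hx, -⟩ := hM (.inl (v, i))
    have hadj := hx.adj_sub
    match x with
    | .inl b => exact absurd hadj gadget_adj_inl_inl
    | .inr ⟨(a, w), haw⟩ =>
      obtain rfl : a = v := hadj
      exact ⟨w, haw, hx⟩
  choose n hn hMn using hcopy
  have hne : n true ≠ n false := by
    intro he
    have h1 := (hMn true).symm
    have h2 := (hMn false).symm
    simp only [he] at h1
    have := (hM _).unique h1 h2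
    simp at this
  have hset : H.neighborSet v = {n true, n false} := by
    ext w
    constructor
    · rintro ⟨h, hnot⟩
      obtain ⟨x, hx, -⟩ := hM (.inr ⟨(v, w), h⟩)
      have hadj := hx.adj_sub
      match x with
      | .inr e =>
        obtain rfl : e = _ := hadj
        exact absurd hx hnot
      | .inl (b, i) =>
        obtain rfl : v = b := hadj
        have := (hM _).unique hx.symm (hMn i)
        have hw : w = n i := by simpa using this
        cases i
        · exact Or.inr hw
        · exact Or.inl hw
    · intro hw
      have : ∃ i, w = n i := by
        rcases hw with rfl | rfl
        exacts [⟨_, rfl⟩, ⟨_, rfl⟩]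
      obtain ⟨i, rfl⟩ := this
      refine ⟨hn i, fun h => ?_⟩
      have := (hM _).unique h (hMn i).symm
      simp at this
  rw [hset, Set.ncard_pair hne]

lemma ncard_darts (X Y : Set V) : {d : G.Dart | d.fst ∈ X ∧ d.snd ∈ Y}.ncard = eCnt G X Y := by
  unfold eCnt
  rw [← Set.ncard_image_of_injective _ (SimpleGraph.Dart.toProd_injective (G := G))]
  congr 1
  ext ⟨a, b⟩
  simp only [Set.mem_image, Set.mem_ofPred_eq]
  constructor
  · rintro ⟨d, ⟨h1, h2⟩, h⟩
    obtain ⟨rfl, rfl⟩ := Prod.mk.inj h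
    exact ⟨h1, h2, d.adj⟩
  · rintro ⟨h1, h2, h⟩
    exact ⟨⟨(a, b), h⟩, ⟨h1, h2⟩, rfl⟩

lemma even_card_gadget [Fintype V] [Fintype ((V × Bool) ⊕ G.Dart)] :
    Even (Fintype.card ((V × Bool) ⊕ G.Dart)) := by
  rw [← Nat.card_eq_fintype_card, ← Set.ncard_univ]
  refine even_ncard_of_involution (Sum.map (fun a => (a.1, !a.2)) SimpleGraph.Dart.symm)
    (fun _ _ => trivial) ?_ ?_
  · rintro (⟨a, i⟩ | d) -
    · simp
    · simpa using d.symm_ne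
  · rintro (⟨a, i⟩ | d) - <;> simp

/-- The vertices of `gadget G` removed for the pair `(S, T)`: the copies of the vertices of `S`
and the darts starting in `T`. -/
def gadgetCut (G : SimpleGraph V) (S T : Set V) : Set ((V × Bool) ⊕ G.Dart) :=
  {x | x.elim (fun a => a.1 ∈ S) (fun d => d.fst ∈ T)}

/-- The part of `gadget G` belonging to a component `Q` of `G − S − T`. -/
def gadgetPart (G : SimpleGraph V) (S Q : Set V) : Set ((V × Bool) ⊕ G.Dart) :=
  {x | x.elim (fun a => a.1 ∈ Q) (fun d => d.fst ∈ Q ∨ d.fst ∈ S ∧ d.snd ∈ Q)}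

variable {S T Q : Set V} {a : V × Bool} {d : G.Dart}

@[simp] lemma inl_mem_gadgetCut : .inl a ∈ gadgetCut G S T ↔ a.1 ∈ S := Iff.rfl

@[simp] lemma inr_mem_gadgetCut : .inr d ∈ gadgetCut G S T ↔ d.fst ∈ T := Iff.rfl

lemma compIn_gadgetCut_subset {c : V} (hc : c ∈ (S ∪ T)ᶜ) :
    compIn (gadget G) (gadgetCut G S T)ᶜ (.inl (c, true)) ⊆
      gadgetPart G S (compIn G (S ∪ T)ᶜ c) := by
  have hsub : compIn G (S ∪ T)ᶜ c ⊆ (S ∪ T)ᶜ := compIn_subset hc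
  refine compIn_subset_of_closed (mem_compIn_self _ _ c) ?_
  rintro (a | d) hx hxU (b | e) hyU hxy
  · exact absurd hxy gadget_adj_inl_inl
  · have hea : e.fst = a.1 := hxy
    exact Or.inl (hea.symm.subst (motive := (· ∈ _)) hx)
  · have hdb : d.fst = b.1 := hxy
    rcases hx with hx | hx
    · exact hdb.subst (motive := (· ∈ _)) hx
    · exact absurd (hdb.subst (motive := (· ∈ S)) hx.1) hyU
  · obtain rfl : e = d.symm := hxy
    have hT : d.snd ∉ T := hyU
    rcases hx with hx | hx
    · by_cases hS : d.snd ∈ S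
      · exact Or.inr ⟨hS, hx⟩
      · exact Or.inl (mem_compIn_of_adj hx (hsub hx) (fun h => h.elim hS hT) d.adj)
    · exact Or.inl hx.2

lemma gadgetPart_subset_compIn (hdisj : Disjoint S T) (hdeg : ∀ v, ∃ w, G.Adj v w) {c : V}
    (hc : c ∈ (S ∪ T)ᶜ) :
    gadgetPart G S (compIn G (S ∪ T)ᶜ c) ⊆
      compIn (gadget G) (gadgetCut G S T)ᶜ (.inl (c, true)) := by
  have hsub : compIn G (S ∪ T)ᶜ c ⊆ (S ∪ T)ᶜ := compIn_subset hc
  set K := compIn (gadget G) (gadgetCut G S T)ᶜ (.inl (c, true)) with hK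
  have hdart : ∀ d : G.Dart, d.fst ∈ (S ∪ T)ᶜ → ∀ i, .inl (d.fst, i) ∈ K → .inr d ∈ K := by
    intro d hd i h
    exact mem_compIn_of_adj h (fun h' => hd (Or.inl h')) (fun h' => hd (Or.inr h')) rfl
  have hcopy : ∀ d : G.Dart, d.fst ∈ (S ∪ T)ᶜ → ∀ i, .inr d ∈ K → .inl (d.fst, i) ∈ K := by
    intro d hd i h
    exact mem_compIn_of_adj h (fun h' => hd (Or.inr h')) (fun h' => hd (Or.inl h')) rfl
  have hinl : ∀ b ∈ compIn G (S ∪ T)ᶜ c, ∀ i, .inl (b, i) ∈ K := by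
    intro b hb
    induction hb with
    | refl =>
      intro i
      obtain ⟨w, hw⟩ := hdeg c
      exact hcopy ⟨(c, w), hw⟩ hc i (hdart ⟨(c, w), hw⟩ hc true (mem_compIn_self _ _ _))
    | @tail b b' _ h ih =>
      intro i
      refine hcopy ⟨(b', b), h.2.2.symm⟩ h.2.1 i ?_
      exact mem_compIn_of_adj (hdart ⟨(b, b'), h.2.2⟩ h.1 true (ih true))
        (fun h' => h.1 (Or.inr h')) (fun h' => h.2.1 (Or.inr h')) rfl
  rintro (⟨b, i⟩ | d) hx
  · exact hinl b hx i
  · rcases hx with hx | ⟨hS, hx⟩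
    · exact hdart d (hsub hx) true (hinl _ hx true)
    · exact mem_compIn_of_adj (hdart d.symm (hsub hx) true (hinl _ hx true))
        (fun h' => hsub hx (Or.inr h')) (Set.disjoint_left.1 hdisj hS) d.symm_symm.symm

lemma compIn_gadgetCut (hdisj : Disjoint S T) (hdeg : ∀ v, ∃ w, G.Adj v w) {c : V}
    (hc : c ∈ (S ∪ T)ᶜ) {x : (V × Bool) ⊕ G.Dart}
    (hx : x ∈ gadgetPart G S (compIn G (S ∪ T)ᶜ c)) :
    compIn (gadget G) (gadgetCut G S T)ᶜ x = gadgetPart G S (compIn G (S ∪ T)ᶜ c) := by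
  rw [compIn_eq_of_mem (gadgetPart_subset_compIn hdisj hdeg hc hx)]
  exact (compIn_gadgetCut_subset hc).antisymm (gadgetPart_subset_compIn hdisj hdeg hc)

variable [Fintype V]

lemma odd_ncard_gadgetPart (hdisj : Disjoint S T) {c : V} (hc : c ∈ (S ∪ T)ᶜ)
    (hodd : Odd (gadgetPart G S (compIn G (S ∪ T)ᶜ c)).ncard) :
    Odd (eCnt G (compIn G (S ∪ T)ᶜ c) T) := by
  classical
  have hsub : compIn G (S ∪ T)ᶜ c ⊆ (S ∪ T)ᶜ := compIn_subset hc
  set Q := compIn G (S ∪ T)ᶜ c with hQ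
  set B : Set ((V × Bool) ⊕ G.Dart) := Sum.inr '' {d : G.Dart | d.fst ∈ Q ∧ d.snd ∈ T} with hB
  have hBsub : B ⊆ gadgetPart G S Q := by
    rintro _ ⟨d, hd, rfl⟩
    exact Or.inl hd.1
  have hBcard : B.ncard = eCnt G Q T := by
    rw [hB, Set.ncard_image_of_injective _ Sum.inr_injective, ncard_darts]
  have hinrB : ∀ d : G.Dart, .inr d ∈ B ↔ d.fst ∈ Q ∧ d.snd ∈ T := fun d => by simp [hB]
  have heven : Even (gadgetPart G S Q \ B).ncard := by
    refine even_ncard_of_involution (Sum.map (fun a => (a.1, !a.2)) SimpleGraph.Dart.symm)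
      ?_ ?_ ?_
    · rintro (a | d) ⟨hx, hxB⟩
      · exact ⟨hx, by simp [hB]⟩
      · rw [hinrB] at hxB
        refine ⟨?_, fun h => ?_⟩
        · rcases hx with hx | hx
          · have hT : d.snd ∉ T := fun h => hxB ⟨hx, h⟩
            by_cases hS : d.snd ∈ S
            · exact Or.inr ⟨hS, hx⟩
            · exact Or.inl (mem_compIn_of_adj hx (hsub hx) (fun h => h.elim hS hT) d.adj)
          · exact Or.inl hx.2
        · have hT : d.fst ∈ T := ((hinrB d.symm).1 h).2
          rcases hx with hx | hx
          · exact hsub hx (Or.inr hT)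
          · exact Set.disjoint_left.1 hdisj hx.1 hT
    · rintro (⟨a, i⟩ | d) -
      · simp
      · simpa using d.symm_ne
    · rintro (⟨a, i⟩ | d) - <;> simp
  have hadd := Set.ncard_sdiff_add_ncard_of_subset hBsub
  grind

lemma ncard_gadgetCut : (gadgetCut G S T).ncard = 2 * S.ncard + eCnt G T Set.univ := by
  classical
  have hsplit : gadgetCut G S T =
      Sum.inl '' (S ×ˢ (Set.univ : Set Bool)) ∪
        Sum.inr '' {d : G.Dart | d.fst ∈ T ∧ d.snd ∈ Set.univ} := by
    ext (a | d) <;> simp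
  rw [hsplit, Set.ncard_union_eq, Set.ncard_image_of_injective _ Sum.inl_injective,
    Set.ncard_image_of_injective _ Sum.inr_injective, ncard_darts, Set.ncard_prod,
    Set.ncard_univ, Nat.card_eq_fintype_card, Fintype.card_bool, mul_comm]
  rw [Set.disjoint_left]
  rintro _ ⟨a, -, rfl⟩ ⟨d, -, h⟩
  exact Sum.inr_ne_inl h

lemma ncard_oddComps_gadgetCut_le (hdisj : Disjoint S T) (hdeg : ∀ v, ∃ w, G.Adj v w) :
    (oddComps (gadget G) (gadgetCut G S T)ᶜ Set.ncard).ncard ≤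
      2 * T.ncard + eCnt G S T + oddCount G S T := by
  classical
  set W := (S ∪ T)ᶜ with hW
  have hcover : oddComps (gadget G) (gadgetCut G S T)ᶜ Set.ncard ⊆
      ((fun a => {.inl a}) '' (T ×ˢ (Set.univ : Set Bool)) ∪
        (fun d => {.inr d}) '' {d : G.Dart | d.fst ∈ S ∧ d.snd ∈ T}) ∪
        gadgetPart G S '' oddComps G W fun C => eCnt G C T := by
    rintro C ⟨x, hx, rfl, hodd⟩
    have hpart : ∀ c ∈ W, x ∈ gadgetPart G S (compIn G W c) →
        compIn (gadget G) (gadgetCut G S T)ᶜ x ∈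
          gadgetPart G S '' oddComps G W fun C => eCnt G C T := by
      intro c hc hxc
      have hcomp := compIn_gadgetCut hdisj hdeg hc hxc
      rw [hcomp] at hodd ⊢
      exact ⟨_, ⟨c, hc, rfl, odd_ncard_gadgetPart hdisj hc hodd⟩, rfl⟩
    have hsingle : (∀ y ∈ (gadgetCut G S T)ᶜ, ¬ (gadget G).Adj x y) →
        compIn (gadget G) (gadgetCut G S T)ᶜ x = {x} := by
      intro h
      refine (compIn_subset_of_closed (Set.mem_singleton x) ?_).antisymm
        (Set.singleton_subset_iff.2 (mem_compIn_self _ _ _))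
      rintro _ rfl _ y hy hxy
      exact absurd hxy (h y hy)
    match x with
    | .inl (v, i) =>
      by_cases hvT : v ∈ T
      · refine Or.inl (Or.inl ⟨(v, i), ⟨hvT, trivial⟩, (hsingle ?_).symm⟩)
        rintro (b | e) hy hxy
        · exact gadget_adj_inl_inl hxy
        · exact hy ((show e.fst = v from hxy).symm.subst (motive := (· ∈ T)) hvT)
      · exact Or.inr (hpart v (fun h => h.elim hx hvT) (mem_compIn_self G W v))
    | .inr d =>
      by_cases hdS : d.fst ∈ S
      · by_cases heT : d.snd ∈ T
        · refine Or.inl (Or.inr ⟨d, ⟨hdS, heT⟩, (hsingle ?_).symm⟩)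
          rintro (b | e) hy hxy
          · exact hy ((show d.fst = b.1 from hxy).subst (motive := (· ∈ S)) hdS)
          · obtain rfl : e = d.symm := hxy
            exact hy heT
        · by_cases heS : d.snd ∈ S
          · exfalso
            have hpair : compIn (gadget G) (gadgetCut G S T)ᶜ (.inr d) =
                {.inr d, .inr d.symm} := by
              refine (compIn_subset_of_closed (Set.mem_insert _ _) ?_).antisymm ?_
              · rintro _ (rfl | rfl) _ (b | e) hy hxy
                · exact absurd ((show d.fst = b.1 from hxy).subst (motive := (· ∈ S)) hdS) hy
                · exact Or.inr (congrArg Sum.inr hxy)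
                · exact absurd ((show d.snd = b.1 from hxy).subst (motive := (· ∈ S)) heS) hy
                · exact Or.inl (congrArg Sum.inr
                    ((show e = d.symm.symm from hxy).trans d.symm_symm))
              · rintro _ (rfl | rfl)
                · exact mem_compIn_self _ _ _
                · exact mem_compIn_of_adj (mem_compIn_self _ _ _) hx heT rfl
            rw [hpair, Set.ncard_pair (by simpa using d.symm_ne.symm)] at hodd
            exact absurd hodd (by decide)
          · exact Or.inr (hpart d.snd (fun h => h.elim heS heT)
              (Or.inr ⟨hdS, mem_compIn_self G W d.snd⟩))
      · exact Or.inr (hpart d.fst (fun h => h.elim hdS hx)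
          (Or.inl (mem_compIn_self G W d.fst)))
  refine (Set.ncard_le_ncard hcover).trans ((Set.ncard_union_le _ _).trans
    (Nat.add_le_add ((Set.ncard_union_le _ _).trans (Nat.add_le_add ?_ ?_)) ?_))
  · refine (Set.ncard_image_le (Set.toFinite _)).trans_eq ?_
    rw [Set.ncard_prod, Set.ncard_univ, Nat.card_eq_fintype_card, Fintype.card_bool, mul_comm]
  · exact (Set.ncard_image_le (Set.toFinite _)).trans_eq (ncard_darts S T)
  · exact Set.ncard_image_le (Set.toFinite _)

lemma dart_of_minimal_violator {U : Set ((V × Bool) ⊕ G.Dart)}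
    (hU : ∀ u ∈ U, 3 ≤ (compIn (gadget G) Uᶜ '' ((gadget G).neighborSet u ∩ Uᶜ)).ncard)
    {d : G.Dart} (hd : .inr d ∈ U) :
    (∀ i, .inl (d.fst, i) ∉ U) ∧ ∀ e : G.Dart, e.fst = d.fst → .inr e ∈ U := by
  classical
  set A : Set ((V × Bool) ⊕ G.Dart) :=
    {.inl (d.fst, true), .inl (d.fst, false), .inr d.symm} with hA
  have hsub : (gadget G).neighborSet (.inr d) ∩ Uᶜ ⊆ A := by
    rintro (⟨b, _ | _⟩ | e) ⟨hx, -⟩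
    · obtain rfl : d.fst = b := hx
      simp [hA]
    · obtain rfl : d.fst = b := hx
      simp [hA]
    · obtain rfl : e = d.symm := hx
      simp [hA]
  have h3 := hU _ hd
  have hAcard : A.ncard ≤ 3 := by
    refine (Set.ncard_insert_le _ _).trans (Nat.succ_le_succ ?_)
    exact (Set.ncard_insert_le _ _).trans_eq (by rw [Set.ncard_singleton])
  have hle : (compIn (gadget G) Uᶜ '' ((gadget G).neighborSet (.inr d) ∩ Uᶜ)).ncard ≤ _ :=
    Set.ncard_image_le (Set.toFinite _)
  have hle' := Set.ncard_le_ncard hsub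
  have hinj := Set.injOn_of_ncard_image_eq
    (f := compIn (gadget G) Uᶜ) (s := (gadget G).neighborSet (.inr d) ∩ Uᶜ) (by omega)
  have hEq : (gadget G).neighborSet (.inr d) ∩ Uᶜ = A :=
    Set.eq_of_subset_of_ncard_le hsub (by omega)
  rw [hEq] at hinj
  have hAU : ∀ x ∈ A, x ∉ U := fun x hx => (hEq ▸ hx : x ∈ _ ∩ Uᶜ).2
  have hcopy : ∀ i, .inl (d.fst, i) ∈ A := by
    rintro (_ | _) <;> simp [hA]
  refine ⟨fun i => hAU _ (hcopy i), fun e he => ?_⟩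
  by_contra heU
  have hcomp : ∀ i, compIn (gadget G) Uᶜ (.inl (d.fst, i)) = compIn (gadget G) Uᶜ (.inr e) :=
    fun i => compIn_eq_of_adj heU (hAU _ (hcopy i)) he
  have := hinj (hcopy true) (hcopy false) ((hcomp true).trans (hcomp false).symm)
  simp at this

lemma copy_of_minimal_violator {U : Set ((V × Bool) ⊕ G.Dart)}
    (hU : ∀ u ∈ U, 3 ≤ (compIn (gadget G) Uᶜ '' ((gadget G).neighborSet u ∩ Uᶜ)).ncard)
    {v : V} {i : Bool} (hv : .inl (v, i) ∈ U) (j : Bool) : .inl (v, j) ∈ U := by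
  classical
  by_contra hj
  have hsub : compIn (gadget G) Uᶜ '' ((gadget G).neighborSet (.inl (v, i)) ∩ Uᶜ) ⊆
      {compIn (gadget G) Uᶜ (.inl (v, j))} := by
    rintro _ ⟨b | e, ⟨hx, hxU⟩, rfl⟩
    · exact absurd (((gadget G).mem_neighborSet _ _).1 hx) gadget_adj_inl_inl
    · exact compIn_eq_of_adj hj hxU hx
  have h1 := Set.ncard_le_ncard hsub
  rw [Set.ncard_singleton] at h1
  have := hU _ hv
  omega

/-- Sufficiency in Tutte's criterion for 2-factors. -/
lemma exists_defect_neg (hdeg : ∀ v, ∃ w, G.Adj v w)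
    (hno : ¬ ∃ H : SimpleGraph V, H ≤ G ∧ ∀ v : V, (H.neighborSet v).ncard = 2) :
    ∃ S T, Disjoint S T ∧ defect G S T < 0 := by
  classical
  have := Fintype.ofFinite ((V × Bool) ⊕ G.Dart)
  obtain ⟨U, hlt, hU⟩ := exists_minimal_violator even_card_gadget
    fun h => hno (exists_two_factor_of_gadget h)
  set S : Set V := {v | .inl (v, true) ∈ U} with hS
  set T : Set V := {v | ∃ d : G.Dart, d.fst = v ∧ .inr d ∈ U} with hT
  have hcut : U = gadgetCut G S T := by
    ext (⟨v, i⟩ | d)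
    · exact ⟨fun h => copy_of_minimal_violator hU h true,
        fun h => copy_of_minimal_violator hU h i⟩
    · refine ⟨fun h => ⟨d, rfl, h⟩, ?_⟩
      rintro ⟨e, he, heU⟩
      exact (dart_of_minimal_violator hU heU).2 d he.symm
  have hdisj : Disjoint S T := by
    rw [Set.disjoint_left]
    rintro _ hvS ⟨d, rfl, hd⟩
    exact (dart_of_minimal_violator hU hd).1 true hvS
  refine ⟨S, T, hdisj, ?_⟩
  rw [hcut, ncard_gadgetCut, ← Set.union_compl_self S, eCnt_union_right G T disjoint_compl_right,
    eCnt_comm G T S] at hlt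
  have hle := ncard_oddComps_gadgetCut_le hdisj hdeg
  unfold defect
  omega

end Gadget

/-- Structural partition lemma: if `G` has minimum degree at least 2 and no
2-factor, then there are disjoint sets `S`, `T` such that, with `O` the union
of the components of `G − S − T` having an odd number of edges into `T` and
`R = V − S − T − O`, properties (i)–(vii) hold, where `oc(S,T)` is the number
of components of `G − S − T` with an odd number of edges into `T`. -/
theorem no_two_factor_partition {V : Type*} [Fintype V] (G : SimpleGraph V)
    (hmin : ∀ v : V, 2 ≤ (G.neighborSet v).ncard)
    (hno : ¬ ∃ H : SimpleGraph V, H ≤ G ∧ ∀ v : V, (H.neighborSet v).ncard = 2) :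
    ∃ S T O R : Set V, Disjoint S T ∧
      O = {v : V | v ∉ S ∪ T ∧ Odd (eCnt G (compIn G (S ∪ T)ᶜ v) T)} ∧
      R = (S ∪ T)ᶜ \ O ∧
      -- (i) T is independent
      (∀ t ∈ T, ∀ t' ∈ T, ¬ G.Adj t t') ∧
      -- (ii) no edges between R and O ∪ T
      (∀ r ∈ R, ∀ x ∈ O ∪ T, ¬ G.Adj r x) ∧
      -- (iii) every component of G⟨O⟩ has an odd number of edges into T
      (∀ v ∈ O, Odd (eCnt G (compIn G O v) T)) ∧
      -- (iv) no t ∈ T has two edges into the same component of G⟨O⟩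
      (∀ t ∈ T, ∀ o ∈ O, ∀ o' ∈ O,
        compIn G O o = compIn G O o' → G.Adj t o → G.Adj t o' → o = o') ∧
      -- (v) every o ∈ O has at most one edge into T
      (∀ o ∈ O, eCnt G {o} T ≤ 1) ∧
      -- (vi) no edge ot with t ∈ T, o ∈ O, e(t,S) = 0 and e(o,O) = 0
      (¬ ∃ t ∈ T, ∃ o ∈ O, G.Adj o t ∧ eCnt G {t} S = 0 ∧ eCnt G {o} O = 0) ∧
      -- (vii) |T| − |S| − (e(T,O) − oc(S,T))/2 > 0
      ((T.ncard : ℚ) - S.ncard -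
        ((eCnt G T O : ℚ) -
          ({C : Set V | ∃ v ∈ O, C = compIn G (S ∪ T)ᶜ v}.ncard : ℚ)) / 2 > 0) := by
  classical
  have hdeg : ∀ v, ∃ w, G.Adj v w := fun v =>
    Set.nonempty_of_ncard_ne_zero (s := G.neighborSet v) (by have := hmin v; omega)
  obtain ⟨S₀, T₀, hd₀, hneg⟩ := exists_defect_neg hdeg hno
  obtain ⟨S, T, hopt⟩ := exists_isOptimalPair G
  replace hneg : defect G S T < 0 := (hopt.defect_le S₀ T₀ hd₀).trans_lt hneg
  set W := (S ∪ T)ᶜ with hW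
  set O := {v : V | v ∉ S ∪ T ∧ Odd (eCnt G (compIn G W v) T)} with hO
  have hOT : ∀ x ∈ O, x ∉ T := fun x hx hxT => hx.1 (Or.inr hxT)
  have hOS : ∀ x ∈ O, x ∉ S := fun x hx hxS => hx.1 (Or.inl hxS)
  have hTN : ∀ t ∈ T, ∀ y, G.Adj t y → y ∉ S → y ∈ O := fun t ht => (hopt.neighbors ht).1
  have hOcl : ∀ x ∈ O, ∀ y ∈ W, G.Adj x y → y ∈ O := fun x hx y hy hxy =>
    ⟨hy, compIn_eq_of_adj (G := G) hx.1 hy hxy ▸ hx.2⟩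
  have hcomp : ∀ v ∈ O, compIn G O v = compIn G W v := by
    intro v hv
    have hsub : compIn G W v ⊆ W := compIn_subset hv.1
    refine compIn_eq_compIn (fun x hx => ⟨hsub hx, compIn_eq_of_mem hx ▸ hv.2⟩)
      fun x hx y hy hxy => mem_compIn_of_adj hx (hsub hx) hy.1 hxy
  refine ⟨S, T, O, W \ O, hopt.disjoint, rfl, rfl, fun t ht t' ht' h => ?_, fun r hr x hx h => ?_,
    fun v hv => hcomp v hv ▸ hv.2, fun t ht o ho o' ho' hoo' h h' => ?_,
    fun o ho => hopt.eCnt_le_one ho.1, ?_, ?_⟩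
  · exact hOT t' (hTN t ht t' h fun hS => Set.disjoint_left.1 hopt.disjoint hS ht') ht'
  · rcases hx with hx | hx
    · exact hr.2 (hOcl x hx r hr.1 h.symm)
    · exact hr.2 (hTN x hx r h.symm fun hS => hr.1 (Or.inl hS))
  · rw [hcomp o ho, hcomp o' ho'] at hoo'
    exact (hopt.neighbors ht).2 ⟨h, hOS o ho⟩ ⟨h', hOS o' ho'⟩ hoo'
  · rintro ⟨t, ht, o, ho, hot, htS, hoO⟩
    rw [eCnt_singleton_left, Set.ncard_eq_zero] at htS hoO
    have hle := hopt.eCnt_le_one ho.1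
    rw [eCnt_singleton_left, Set.ncard_le_one] at hle
    have := hopt.ncard_neighborSet_le_one ht ho.1 hot.symm
      (fun y hy hyS => Set.eq_empty_iff_forall_notMem.1 htS y ⟨hy, hyS⟩) fun y hy hyS => by
        by_cases hyT : y ∈ T
        · exact hle y ⟨hy, hyT⟩ t ⟨hot, ht⟩
        · exact absurd ⟨hy, hOcl o ho y (fun h => h.elim hyS hyT) hy⟩
            (Set.eq_empty_iff_forall_notMem.1 hoO y)
    have := hmin t
    omega
  · have he : eCnt G T Sᶜ = eCnt G T O :=
      eCnt_eq_of_forall_adj_iff fun t ht y hy => ⟨hTN t ht y hy, hOS y⟩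
    have hq : oddCount G S T = {C : Set V | ∃ v ∈ O, C = compIn G W v}.ncard := by
      unfold oddCount
      congr 1
      ext C
      constructor
      · rintro ⟨v, hv, rfl, hodd⟩
        exact ⟨v, ⟨hv, hodd⟩, rfl⟩
      · rintro ⟨v, hv, rfl⟩
        exact ⟨v, hv.1, rfl, hv.2⟩
    rw [← he, ← hq]
    have hneg' : ((defect G S T : ℤ) : ℚ) < 0 := by exact_mod_cast hneg
    unfold defect at hneg'
    push_cast at hneg'
    linarith
end

section
/- Every connected s-quadrangular graph with at least three vertices contains a 2-factor. -/
open Finset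

namespace SimpleGraph

/-- A finite set with a fixed-point-free involution has even cardinality. -/
theorem even_card_of_involution {α : Type*} {s : Finset α} (f : α → α)
    (hmem : ∀ x ∈ s, f x ∈ s) (hinv : ∀ x, f (f x) = x) (hne : ∀ x, f x ≠ x) : Even #s := by
  have h : ∑ _x ∈ s, (1 : ZMod 2) = 0 :=
    Finset.sum_involution (fun x _ => f x) (fun _ _ => by decide) (fun x _ _ => hne x)
      hmem (fun x _ => hinv x)
  rw [Finset.sum_const, nsmul_one] at h
  exact (ZMod.natCast_eq_zero_iff_even).1 h

section Barrier

variable {V : Type*}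

/-- A family of pairwise disjoint vertex sets avoiding `U`, each of them a union of
components of `G - U`. -/
structure IsClosedFamily (G : SimpleGraph V) (U : Finset V) (𝒞 : Finset (Finset V)) : Prop where
  pairwiseDisjoint : (𝒞 : Set (Finset V)).PairwiseDisjoint id
  notMem : ∀ C ∈ 𝒞, ∀ c ∈ C, c ∉ U
  closed : ∀ C ∈ 𝒞, ∀ c ∈ C, ∀ w, G.Adj c w → w ∈ C ∨ w ∈ U

namespace IsClosedFamily

variable {G : SimpleGraph V} {U : Finset V} {𝒞 : Finset (Finset V)}

theorem eq_of_mem (h : IsClosedFamily G U 𝒞) {C D : Finset V} (hC : C ∈ 𝒞) (hD : D ∈ 𝒞) {x : V}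
    (hxC : x ∈ C) (hxD : x ∈ D) : C = D :=
  h.pairwiseDisjoint.elim_finset hC hD x hxC hxD

/-- A subfamily whose members meet the image of `X` is at most as large as `X`. -/
theorem card_le (h : IsClosedFamily G U 𝒞) {β : Type*} {X : Finset β} (g : β → V)
    {𝒟 : Finset (Finset V)} (h𝒟 : 𝒟 ⊆ 𝒞) (hX : ∀ C ∈ 𝒟, ∃ x ∈ X, g x ∈ C) : #𝒟 ≤ #X := by
  refine card_le_card_of_forall_subsingleton (fun C x => g x ∈ C) hX ?_
  rintro x - C ⟨hC, hxC⟩ D ⟨hD, hxD⟩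
  exact h.eq_of_mem (h𝒟 hC) (h𝒟 hD) hxC hxD

/-- Deleting from the family a subfamily that contains every member adjacent to `U \ U'`. -/
theorem of_subset (h : IsClosedFamily G U 𝒞) {U' : Finset V} {𝒞' : Finset (Finset V)}
    (hU : U' ⊆ U) (h𝒞 : 𝒞' ⊆ 𝒞)
    (hadj : ∀ C ∈ 𝒞', ∀ c ∈ C, ∀ u ∈ U, G.Adj c u → u ∈ U') : IsClosedFamily G U' 𝒞' where
  pairwiseDisjoint := h.pairwiseDisjoint.subset (coe_subset.2 h𝒞)
  notMem C hC c hc hcU := h.notMem C (h𝒞 hC) c hc (hU hcU)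
  closed C hC c hc w hw :=
    (h.closed C (h𝒞 hC) c hc w hw).imp_right fun hwU => hadj C hC c hc w hwU hw

variable [Fintype V] [DecidableEq V]

/-- The vertices outside `U` that are covered by no member of the family. -/
def rest (U : Finset V) (𝒞 : Finset (Finset V)) : Finset V :=
  {v | v ∉ U ∧ ∀ C ∈ 𝒞, v ∉ C}

theorem mem_rest {v : V} : v ∈ rest U 𝒞 ↔ v ∉ U ∧ ∀ C ∈ 𝒞, v ∉ C := by
  simp [rest]

theorem insert_rest (h : IsClosedFamily G U 𝒞) : IsClosedFamily G U (insert (rest U 𝒞) 𝒞) where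
  pairwiseDisjoint := by
    rw [coe_insert]
    refine h.pairwiseDisjoint.insert fun C hC _ => ?_
    exact Finset.disjoint_left.2 fun x hx hxC => (mem_rest.1 hx).2 C hC hxC
  notMem C hC c hc := by
    rcases Finset.mem_insert.1 hC with rfl | hC
    · exact (mem_rest.1 hc).1
    · exact h.notMem C hC c hc
  closed C hC c hc w hw := by
    rcases Finset.mem_insert.1 hC with rfl | hC
    · by_contra! hcon
      obtain ⟨D, hD, hwD⟩ : ∃ D ∈ 𝒞, w ∈ D := by
        by_contra! hD
        exact hcon.1 (mem_rest.2 ⟨hcon.2, hD⟩)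
      rcases h.closed D hD w hwD c hw.symm with hcD | hcU
      · exact (mem_rest.1 hc).2 D hD hcD
      · exact (mem_rest.1 hc).1 hcU
    · exact h.closed C hC c hc w hw

theorem card_insert_rest (hne : (rest U 𝒞).Nonempty) : #(insert (rest U 𝒞) 𝒞) = #𝒞 + 1 := by
  refine card_insert_of_notMem fun hmem => ?_
  obtain ⟨x, hx⟩ := hne
  exact (mem_rest.1 hx).2 _ hmem hx

theorem sum_add_sum_rest (h : IsClosedFamily G U 𝒞) (f : V → ℕ) :
    ∑ v ∈ U, f v + ∑ C ∈ 𝒞, ∑ v ∈ C, f v + ∑ v ∈ rest U 𝒞, f v = ∑ v, f v := by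
  have hd : Disjoint U (𝒞.biUnion id) := by
    rw [Finset.disjoint_right]
    intro x hx
    obtain ⟨C, hC, hxC⟩ := mem_biUnion.1 hx
    exact h.notMem C hC x hxC
  have hb : ∑ v ∈ 𝒞.biUnion id, f v = ∑ C ∈ 𝒞, ∑ v ∈ C, f v := sum_biUnion h.pairwiseDisjoint
  have hr : rest U 𝒞 = (U ∪ 𝒞.biUnion id)ᶜ := by
    ext x
    simp [mem_rest]
  rw [hr, ← hb, ← sum_union hd, sum_add_sum_compl]

end IsClosedFamily

variable [Fintype V] [DecidableEq V]

theorem card_darts (G : SimpleGraph V) [DecidableRel G.Adj] (A B : Finset V) :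
    #{d : G.Dart | d.fst ∈ A ∧ d.snd ∈ B} = ∑ a ∈ A, #{b ∈ B | G.Adj a b} := by
  rw [← card_sigma]
  refine card_bij (fun d _ => ⟨d.fst, d.snd⟩) ?_ ?_ ?_
  · intro d hd
    simpa using hd
  · intro d _ e _ hde
    simp only [Sigma.mk.injEq, heq_eq_eq] at hde
    exact Dart.ext _ _ (Prod.ext hde.1 hde.2)
  · rintro ⟨a, b⟩ hab
    simp only [mem_sigma, mem_filter] at hab
    exact ⟨⟨(a, b), hab.2.2⟩, by simpa using ⟨hab.1, hab.2.1⟩, rfl⟩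

/-- Sets `S`, `T` and a family of parts of `G - (S ∪ T)` that violate the condition of Tutte's
characterization of the graphs with a 2-factor. -/
structure IsTwoFactorBarrier (G : SimpleGraph V) [DecidableRel G.Adj] (S T : Finset V)
    (𝒞 : Finset (Finset V)) : Prop where
  family : IsClosedFamily G (S ∪ T) 𝒞
  disjoint : Disjoint S T
  odd : ∀ C ∈ 𝒞, Odd (∑ c ∈ C, #{t ∈ T | G.Adj c t})
  card_lt : 2 * #S + ∑ t ∈ T, #{w | G.Adj t w ∧ w ∉ S} < 2 * #T + #𝒞

namespace IsTwoFactorBarrier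

variable {G : SimpleGraph V} [DecidableRel G.Adj] {S T : Finset V} {𝒞 : Finset (Finset V)}

theorem even_sum_card_adj (G : SimpleGraph V) [DecidableRel G.Adj] (T : Finset V) :
    Even (∑ c ∈ T, #{t ∈ T | G.Adj c t}) := by
  rw [← card_darts]
  refine even_card_of_involution Dart.symm ?_ Dart.symm_symm Dart.symm_ne
  intro d hd
  simpa [and_comm] using hd

theorem sum_card_adj_notMem (G : SimpleGraph V) [DecidableRel G.Adj] (S T : Finset V) :
    ∑ t ∈ T, #{w | G.Adj t w ∧ w ∉ S} = ∑ w ∈ Sᶜ, #{t ∈ T | G.Adj w t} := by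
  have h := sum_card_bipartiteAbove_eq_sum_card_bipartiteBelow (s := T) (t := Sᶜ) G.Adj
  simp only [bipartiteAbove, bipartiteBelow] at h
  have e1 : ∀ t, #{w ∈ Sᶜ | G.Adj t w} = #{w | G.Adj t w ∧ w ∉ S} := by
    intro t
    congr 1
    ext w
    simp [and_comm]
  simp only [e1] at h
  rw [h]
  simp only [G.adj_comm]

/-- By parity, a barrier can be enlarged so that the violation is by at least two. -/
theorem exists_add_two_le (h : IsTwoFactorBarrier G S T 𝒞) :
    ∃ 𝒟, IsTwoFactorBarrier G S T 𝒟 ∧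
      2 * #S + ∑ t ∈ T, #{w | G.Adj t w ∧ w ∉ S} + 2 ≤ 2 * #T + #𝒟 := by
  by_cases h2 : 2 * #S + ∑ t ∈ T, #{w | G.Adj t w ∧ w ∉ S} + 2 ≤ 2 * #T + #𝒞
  · exact ⟨𝒞, h, h2⟩
  have hlt := h.card_lt
  have hpart := h.family.sum_add_sum_rest fun c => #{t ∈ T | G.Adj c t}
  have htotal := sum_add_sum_compl S fun c => #{t ∈ T | G.Adj c t}
  rw [← sum_card_adj_notMem] at htotal
  rw [sum_union h.disjoint] at hpart
  have hT := even_sum_card_adj G T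
  have h𝒞 : Odd (∑ C ∈ 𝒞, ∑ c ∈ C, #{t ∈ T | G.Adj c t}) ↔ Odd #𝒞 := by
    rw [odd_sum_iff_odd_card_odd, filter_true_of_mem h.odd]
  have hodd : Odd (∑ c ∈ IsClosedFamily.rest (S ∪ T) 𝒞, #{t ∈ T | G.Adj c t}) := by
    rw [Nat.odd_iff, Nat.odd_iff] at h𝒞
    rw [Nat.even_iff] at hT
    rw [Nat.odd_iff]
    omega
  have hcard : #(insert (IsClosedFamily.rest (S ∪ T) 𝒞) 𝒞) = #𝒞 + 1 := by
    refine IsClosedFamily.card_insert_rest ?_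
    rw [nonempty_iff_ne_empty]
    intro hempty
    simp [hempty] at hodd
  refine ⟨_, ⟨h.family.insert_rest, h.disjoint, ?_, ?_⟩, ?_⟩
  · intro C hC
    rcases mem_insert.1 hC with rfl | hC
    · exact hodd
    · exact h.odd C hC
  · omega
  · omega

theorem insert_left (h : IsTwoFactorBarrier G S T 𝒞)
    (h2 : 2 * #S + ∑ t ∈ T, #{w | G.Adj t w ∧ w ∉ S} + 2 ≤ 2 * #T + #𝒞)
    {v : V} (hS : v ∉ S) (hT : v ∉ T) (hv : 1 < #{t ∈ T | G.Adj v t}) :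
    IsTwoFactorBarrier G (insert v S) T {C ∈ 𝒞 | v ∉ C} where
  family :=
    { pairwiseDisjoint := h.family.pairwiseDisjoint.subset (coe_subset.2 (filter_subset _ _))
      notMem := fun C hC c hc hcU => by
        rw [mem_filter] at hC
        rw [insert_union, mem_insert] at hcU
        rcases hcU with rfl | hcU
        · exact hC.2 hc
        · exact h.family.notMem C hC.1 c hc hcU
      closed := fun C hC c hc w hw => by
        rw [mem_filter] at hC
        rw [insert_union, mem_insert]
        exact (h.family.closed C hC.1 c hc w hw).imp_right Or.inr }
  disjoint := by
    rw [disjoint_insert_left]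
    exact ⟨hT, h.disjoint⟩
  odd C hC := h.odd C (mem_filter.1 hC).1
  card_lt := by
    have h𝒞 : #{C ∈ 𝒞 | v ∈ C} ≤ 1 := by
      rw [card_le_one]
      intro C hC D hD
      rw [mem_filter] at hC hD
      exact h.family.eq_of_mem hC.1 hD.1 hC.2 hD.2
    have hsplit := card_filter_add_card_filter_not (s := 𝒞) (fun C => v ∈ C)
    have hS' := card_insert_of_notMem hS
    have hsum : ∑ w ∈ (insert v S)ᶜ, #{t ∈ T | G.Adj w t} + #{t ∈ T | G.Adj v t} =
        ∑ w ∈ Sᶜ, #{t ∈ T | G.Adj w t} := by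
      rw [compl_insert, sum_erase_add _ _ (mem_compl.2 hS)]
    rw [sum_card_adj_notMem] at h2 ⊢
    omega

theorem erase_right (h : IsTwoFactorBarrier G S T 𝒞)
    (h2 : 2 * #S + ∑ t ∈ T, #{w | G.Adj t w ∧ w ∉ S} + 2 ≤ 2 * #T + #𝒞)
    {t : V} (ht : t ∈ T) (hlt : #{C ∈ 𝒞 | ∃ c ∈ C, G.Adj t c} < #{w | G.Adj t w ∧ w ∉ S}) :
    IsTwoFactorBarrier G S (T.erase t) {C ∈ 𝒞 | ¬ ∃ c ∈ C, G.Adj t c} where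
  family := by
    refine h.family.of_subset (union_subset_union_right (erase_subset _ _)) (filter_subset _ _) ?_
    intro C hC c hc u hu hcu
    rw [mem_filter] at hC
    have hut : u ≠ t := by
      rintro rfl
      exact hC.2 ⟨c, hc, hcu.symm⟩
    rw [mem_union] at hu ⊢
    exact hu.imp_right fun huT => mem_erase.2 ⟨hut, huT⟩
  disjoint := h.disjoint.mono_right (erase_subset _ _)
  odd C hC := by
    rw [mem_filter] at hC
    convert h.odd C hC.1 using 1
    refine sum_congr rfl fun c hc => ?_
    congr 1
    ext u
    simp only [mem_filter, mem_erase]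
    refine ⟨fun hu => ⟨hu.1.2, hu.2⟩, fun hu => ⟨⟨?_, hu.1⟩, hu.2⟩⟩
    rintro rfl
    exact hC.2 ⟨c, hc, hu.2.symm⟩
  card_lt := by
    have hsplit := card_filter_add_card_filter_not (s := 𝒞) (fun C => ∃ c ∈ C, G.Adj t c)
    have hT := card_erase_add_one ht
    have hsum := sum_erase_add T (fun t => #{w | G.Adj t w ∧ w ∉ S}) ht
    omega

end IsTwoFactorBarrier

end Barrier

end SimpleGraph

namespace SimpleGraph

namespace IsTwoFactorBarrier

variable {V : Type*} [Fintype V] [DecidableEq V] {G : SimpleGraph V} [DecidableRel G.Adj]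
  {S T : Finset V} {𝒞 : Finset (Finset V)}

/-- A barrier that is extremal with respect to enlarging `S` and shrinking `T`. -/
theorem exists_extremal (h : IsTwoFactorBarrier G S T 𝒞) :
    ∃ S T 𝒞, IsTwoFactorBarrier G S T 𝒞 ∧
      (∀ v ∉ S, v ∉ T → #{t ∈ T | G.Adj v t} ≤ 1) ∧
      ∀ t ∈ T, #{w | G.Adj t w ∧ w ∉ S} ≤ #{C ∈ 𝒞 | ∃ c ∈ C, G.Adj t c} := by
  induction hm : Fintype.card V - #S + #T using Nat.strong_induction_on generalizing S T 𝒞 with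
  | _ m ih =>
    obtain ⟨𝒟, hb, h2⟩ := h.exists_add_two_le
    by_cases hS : ∀ v ∉ S, v ∉ T → #{t ∈ T | G.Adj v t} ≤ 1
    · by_cases hT : ∀ t ∈ T, #{w | G.Adj t w ∧ w ∉ S} ≤ #{C ∈ 𝒟 | ∃ c ∈ C, G.Adj t c}
      · exact ⟨S, T, 𝒟, hb, hS, hT⟩
      · push Not at hT
        obtain ⟨t, ht, hlt⟩ := hT
        have hcard := card_erase_add_one ht
        exact ih _ (by omega) (hb.erase_right h2 ht hlt) rfl
    · push Not at hS
      obtain ⟨v, hvS, hvT, hlt⟩ := hS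
      have hcard := card_insert_of_notMem hvS
      have hle := card_le_univ (insert v S)
      exact ih _ (by omega) (hb.insert_left h2 hvS hvT hlt) rfl

theorem exists_unique_adj (h : IsTwoFactorBarrier G S T 𝒞) {t w : V}
    (hle : #{w | G.Adj t w ∧ w ∉ S} ≤ #{C ∈ 𝒞 | ∃ c ∈ C, G.Adj t c})
    (hw : G.Adj t w) (hwS : w ∉ S) : ∃ C ∈ 𝒞, w ∈ C ∧ ∀ x ∈ C, G.Adj t x → x = w := by
  have hex : ∀ C : Finset V, ∃ c : V, (∃ c ∈ C, G.Adj t c) → c ∈ C ∧ G.Adj t c := by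
    intro C
    by_cases hC : ∃ c ∈ C, G.Adj t c
    · obtain ⟨c, hc⟩ := hC
      exact ⟨c, fun _ => hc⟩
    · exact ⟨w, fun h => absurd h hC⟩
  choose g hg using hex
  have hnS : ∀ C ∈ 𝒞, ∀ c ∈ C, c ∉ S := fun C hC c hc hcS =>
    h.family.notMem C hC c hc (mem_union_left _ hcS)
  have hmaps : Set.MapsTo g ({C ∈ 𝒞 | ∃ c ∈ C, G.Adj t c} : Finset (Finset V))
      ({w | G.Adj t w ∧ w ∉ S} : Finset V) := by
    intro C hC
    rw [mem_coe, mem_filter] at hC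
    have := hg C hC.2
    simpa using ⟨this.2, hnS C hC.1 _ this.1⟩
  have hinj : Set.InjOn g ({C ∈ 𝒞 | ∃ c ∈ C, G.Adj t c} : Finset (Finset V)) := by
    intro C hC D hD hCD
    rw [mem_coe, mem_filter] at hC hD
    exact h.family.eq_of_mem hC.1 hD.1 (hg C hC.2).1 (hCD ▸ (hg D hD.2).1)
  have hsurj := surjOn_of_injOn_of_card_le g hmaps hinj hle
  have key : ∀ C ∈ 𝒞, ∀ x ∈ C, G.Adj t x → x = g C := by
    intro C hC x hxC hx
    obtain ⟨D, hD, hDx⟩ := hsurj (show x ∈ _ by simpa using ⟨hx, hnS C hC x hxC⟩)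
    rw [mem_coe, mem_filter] at hD
    rw [← h.family.eq_of_mem hD.1 hC (hDx ▸ (hg D hD.2).1) hxC, hDx]
  obtain ⟨D, hD, hDw⟩ := hsurj (show w ∈ _ by simpa using ⟨hw, hwS⟩)
  rw [mem_coe, mem_filter] at hD
  exact ⟨D, hD.1, hDw ▸ (hg D hD.2).1, fun x hx hxt => (key D hD.1 x hx hxt).trans hDw⟩

end IsTwoFactorBarrier

end SimpleGraph

namespace SQuadG

variable {V : Type*} [Fintype V] {G : SimpleGraph V}

/-- A Hall-type consequence of s-quadrangularity: if every member of `Q` has a neighbor in `A`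
and `A` contains all common neighbors of pairs from `Q`, then `Q` is at most as large as `A`. -/
theorem card_le_of_common (hsq : SQuadG G) {Q A : Finset V} (hnbr : ∀ q ∈ Q, ∃ a ∈ A, G.Adj q a)
    (hcommon : ∀ q ∈ Q, ∀ r ∈ Q, q ≠ r → ∀ x, G.Adj q x → G.Adj r x → x ∈ A) : #Q ≤ #A := by
  classical
  set P : Finset V := {q ∈ Q | ∃ r ∈ Q, r ≠ q ∧ ∃ x, G.Adj q x ∧ G.Adj r x} with hP
  have hPQ : P ⊆ Q := filter_subset _ _
  have hshare : ∀ q ∈ Q, ∀ r ∈ Q, r ≠ q → ∀ x, G.Adj q x → G.Adj r x → q ∈ P :=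
    fun q hq r hr hne x hqx hrx => mem_filter.2 ⟨hq, r, hr, hne, x, hqx, hrx⟩
  have hPcard : #P ≤ (commonUnionG G P).ncard := by
    have hpart : ∀ u ∈ (P : Set V), ∃ v ∈ (P : Set V), v ≠ u ∧
        (G.neighborSet u ∩ G.neighborSet v).Nonempty := by
      intro u hu
      obtain ⟨huQ, r, hr, hne, x, hux, hrx⟩ := mem_filter.1 hu
      exact ⟨r, hshare r hr u huQ hne.symm x hrx hux, hne, x, hux, hrx⟩
    rcases P.eq_empty_or_nonempty with hempty | ⟨u, hu⟩
    · simp [hempty]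
    · obtain ⟨v, hv, hne, -⟩ := hpart u hu
      have h2 : 1 < #P := one_lt_card.2 ⟨v, hv, u, hu, hne⟩
      simpa [Set.ncard_coe_finset] using hsq (P : Set V) (by rwa [Set.ncard_coe_finset]) hpart
  choose! f hf using hnbr
  have hfinj : Set.InjOn f (Q \ P : Finset V) := by
    intro q hq r hr hqr
    rw [mem_coe, mem_sdiff] at hq hr
    by_contra hne
    exact hq.2 (hshare q hq.1 r hr.1 (Ne.symm hne) (f q) (hf q hq.1).2 (hqr ▸ (hf r hr.1).2))
  have hsub : ((Q \ P).image f : Set V) ∪ commonUnionG G P ⊆ A := by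
    rintro x (hx | ⟨u, hu, v, hv, hne, hux, hvx⟩)
    · obtain ⟨q, hq, rfl⟩ := mem_image.1 (mem_coe.1 hx)
      exact (hf q (mem_sdiff.1 hq).1).1
    · exact hcommon u (hPQ hu) v (hPQ hv) hne x hux hvx
  have hdisj : Disjoint ((Q \ P).image f : Set V) (commonUnionG G P) := by
    rw [Set.disjoint_left]
    rintro x hx ⟨u, hu, v, hv, hne, hux, hvx⟩
    obtain ⟨q, hq, rfl⟩ := mem_image.1 (mem_coe.1 hx)
    rw [mem_sdiff] at hq
    refine hq.2 (hshare q hq.1 u (hPQ hu) ?_ _ (hf q hq.1).2 hux)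
    rintro rfl
    exact hq.2 hu
  have hle := Set.ncard_le_ncard hsub
  rw [Set.ncard_union_eq hdisj, Set.ncard_coe_finset, Set.ncard_coe_finset,
    card_image_of_injOn hfinj] at hle
  have := card_sdiff_add_card_eq_card hPQ
  omega

/-- Two vertices with a common neighbor have a second one. -/
theorem exists_ne_common (hsq : SQuadG G) {u v x : V} (hne : u ≠ v) (hux : G.Adj u x)
    (hvx : G.Adj v x) : ∃ z, z ≠ x ∧ G.Adj u z ∧ G.Adj v z := by
  by_contra! hcon
  have h := hsq {u, v} (by rw [Set.ncard_pair hne]) (by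
    rintro a (rfl | rfl)
    · exact ⟨v, by simp, hne.symm, x, hux, hvx⟩
    · exact ⟨u, by simp, hne, x, hvx, hux⟩)
  rw [Set.ncard_pair hne] at h
  have hsub : commonUnionG G {u, v} ⊆ {x} := by
    rintro z ⟨a, ha, b, hb, hab, haz, hbz⟩
    by_contra hzx
    rcases ha with rfl | rfl <;> rcases hb with rfl | rfl
    · exact hab rfl
    · exact hcon z hzx haz hbz
    · exact hcon z hzx hbz haz
    · exact hab rfl
  have := Set.ncard_le_ncard hsub
  rw [Set.ncard_singleton] at this
  omega

theorem two_le_card_adj [DecidableRel G.Adj] (hconn : G.Connected) (hcard : 3 ≤ Fintype.card V)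
    (hsq : SQuadG G) (v : V) : 2 ≤ #{w | G.Adj v w} := by
  classical
  have : Nontrivial V := Fintype.one_lt_card_iff_nontrivial.1 (by omega)
  obtain ⟨x, hx⟩ := hconn.preconnected.exists_adj_of_nontrivial v
  by_contra hlt
  have huniq : ∀ w, G.Adj v w → w = x := by
    intro w hw
    by_contra hne
    exact hlt (one_lt_card.2 ⟨w, by simpa using hw, x, by simpa using hx, hne⟩)
  have hx' : ∀ w, G.Adj x w → w = v := by
    intro w hw
    by_contra hne
    obtain ⟨z, hz, hvz, -⟩ := hsq.exists_ne_common (Ne.symm hne) hx hw.symm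
    exact hz (huniq z hvz)
  have hreach : ∀ w, G.Reachable v w → w = v ∨ w = x := by
    rintro w ⟨p⟩
    have : ∀ {a b : V} (p : G.Walk a b), a = v ∨ a = x → b = v ∨ b = x := by
      intro a b p
      induction p with
      | nil => exact id
      | cons hadj _ ih =>
        rintro (rfl | rfl)
        · exact ih (Or.inr (huniq _ hadj))
        · exact ih (Or.inl (hx' _ hadj))
    exact this p (Or.inl rfl)
  have hsub : (univ : Finset V) ⊆ {v, x} := by
    intro w _
    simpa using hreach w (hconn.preconnected v w)
  have h1 := card_le_card hsub
  have h2 : #({v, x} : Finset V) ≤ 2 := card_le_two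
  rw [card_univ] at h1
  omega

/-- A connected s-quadrangular graph with at least three vertices has no 2-factor barrier. -/
theorem not_isTwoFactorBarrier [DecidableEq V] [DecidableRel G.Adj] (hconn : G.Connected)
    (hcard : 3 ≤ Fintype.card V) (hsq : SQuadG G) (S T : Finset V) (𝒞 : Finset (Finset V)) :
    ¬ G.IsTwoFactorBarrier S T 𝒞 := by
  intro h
  have : Nonempty V := hconn.nonempty
  obtain ⟨S, T, 𝒞, h, hS, hT⟩ := h.exists_extremal
  have hnS : ∀ C ∈ 𝒞, ∀ c ∈ C, c ∉ S := fun C hC c hc hcS =>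
    h.family.notMem C hC c hc (mem_union_left _ hcS)
  have hnT : ∀ C ∈ 𝒞, ∀ c ∈ C, c ∉ T := fun C hC c hc hcT =>
    h.family.notMem C hC c hc (mem_union_right _ hcT)
  have hdisj : ∀ t ∈ T, t ∉ S := fun t ht hs => Finset.disjoint_left.1 h.disjoint hs ht
  have hindep : ∀ t ∈ T, ∀ u ∈ T, ¬ G.Adj t u := by
    intro t ht u hu hadj
    obtain ⟨C, hC, huC, -⟩ := h.exists_unique_adj (hT t ht) hadj (hdisj u hu)
    exact hnT C hC u huC hu
  have huniq : ∀ v ∉ S, v ∉ T → ∀ t ∈ T, ∀ u ∈ T, G.Adj v t → G.Adj v u → t = u := by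
    intro v hvS hvT t ht u hu hvt hvu
    exact card_le_one.1 (hS v hvS hvT) t (mem_filter.2 ⟨ht, hvt⟩) u (mem_filter.2 ⟨hu, hvu⟩)
  set A : Finset V := {t ∈ T | #{w | G.Adj t w ∧ w ∉ S} ≤ 1} with hA
  set B : Finset V := {t ∈ T | ¬ #{w | G.Adj t w ∧ w ∉ S} ≤ 1} with hB
  have hAT : A ⊆ T := filter_subset _ _
  have hBT : B ⊆ T := filter_subset _ _
  set 𝒞₁ : Finset (Finset V) := {C ∈ 𝒞 | ∃ c ∈ C, ∃ a ∈ A, G.Adj c a} with h𝒞₁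
  set 𝒞₀ : Finset (Finset V) := {C ∈ 𝒞 | ¬ ∃ c ∈ C, ∃ a ∈ A, G.Adj c a} with h𝒞₀
  have h𝒞₀𝒞 : 𝒞₀ ⊆ 𝒞 := filter_subset _ _
  -- Parts adjacent to `A` are counted by the edges leaving `A`.
  have hcard₁ : #𝒞₁ ≤ ∑ a ∈ A, #{w | G.Adj a w ∧ w ∉ S} := by
    rw [← card_sigma]
    refine h.family.card_le Sigma.snd (filter_subset _ _) fun C hC => ?_
    obtain ⟨hC𝒞, c, hc, a, ha, hca⟩ := mem_filter.1 hC
    exact ⟨⟨a, c⟩, by simpa using ⟨ha, hca.symm, hnS C hC𝒞 c hc⟩, hc⟩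
  -- The remaining parts get a representative adjacent to `B`.
  have hex : ∀ C ∈ 𝒞₀, ∃ w b, w ∈ C ∧ b ∈ B ∧ G.Adj w b := by
    intro C hC
    obtain ⟨hC𝒞, hCA⟩ := mem_filter.1 hC
    have hpos := (h.odd C hC𝒞).pos
    obtain ⟨w, hw, hwpos⟩ := exists_ne_zero_of_sum_ne_zero hpos.ne'
    obtain ⟨b, hb⟩ := card_pos.1 (Nat.pos_of_ne_zero hwpos)
    rw [mem_filter] at hb
    refine ⟨w, b, hw, mem_filter.2 ⟨hb.1, fun hle => hCA ⟨w, hw, b, ?_, hb.2⟩⟩, hb.2⟩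
    exact mem_filter.2 ⟨hb.1, hle⟩
  choose! w b hwC hbB hwb using hex
  have hwinj : Set.InjOn w 𝒞₀ := fun C hC D hD hCD =>
    h.family.eq_of_mem (h𝒞₀𝒞 hC) (h𝒞₀𝒞 hD) (hwC C hC) (hCD ▸ hwC D hD)
  have hwS : ∀ C ∈ 𝒞₀, w C ∉ S := fun C hC => hnS C (h𝒞₀𝒞 hC) _ (hwC C hC)
  have hwT : ∀ C ∈ 𝒞₀, w C ∉ T := fun C hC => hnT C (h𝒞₀𝒞 hC) _ (hwC C hC)
  have hbuniq : ∀ C ∈ 𝒞₀, ∀ t ∈ T, G.Adj (w C) t → t = b C := fun C hC t ht hadj =>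
    huniq (w C) (hwS C hC) (hwT C hC) t ht (b C) (hBT (hbB C hC)) hadj (hwb C hC)
  set B₂ : Finset V := {t ∈ B | 2 ≤ #{C ∈ 𝒞₀ | b C = t}} with hB₂
  have hB₂card : 2 * #B₂ ≤ #𝒞₀ := by
    rw [card_eq_sum_card_fiberwise hbB, mul_comm, ← smul_eq_mul, ← sum_const]
    exact (sum_le_sum fun t ht => (mem_filter.1 ht).2).trans
      (sum_le_sum_of_subset (filter_subset _ _))
  have hQcard : #(A ∪ 𝒞₀.image w) = #A + #𝒞₀ := by
    rw [card_union_of_disjoint, card_image_of_injOn hwinj]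
    rw [Finset.disjoint_left]
    intro x hx hx'
    obtain ⟨C, hC, rfl⟩ := mem_image.1 hx'
    exact hwT C hC (hAT hx)
  have hnbrA : ∀ a ∈ A, ∃ s ∈ S, G.Adj a s := by
    intro a ha
    by_contra! hcon
    have h2 := two_le_card_adj hconn hcard hsq a
    have h1 := (mem_filter.1 ha).2
    have heq : ({x | G.Adj a x} : Finset V) = ({x | G.Adj a x ∧ x ∉ S} : Finset V) := by
      ext x
      simp only [mem_filter, mem_univ, true_and]
      exact ⟨fun hx => ⟨hx, fun hxS => hcon x hxS hx⟩, fun hx => hx.1⟩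
    rw [heq] at h2
    omega
  have hnbrw : ∀ C ∈ 𝒞₀, ∃ s ∈ S, G.Adj (w C) s := by
    intro C hC
    have hbT := hBT (hbB C hC)
    have hdeg := (mem_filter.1 (hbB C hC)).2
    obtain ⟨c, hc, hcw⟩ := exists_mem_ne (not_le.1 hdeg) (w C)
    simp only [mem_filter, mem_univ, true_and] at hc
    obtain ⟨D, hD, hcD, hDuniq⟩ := h.exists_unique_adj (hT _ hbT) hc.1 hc.2
    have hCD : C ≠ D := by
      rintro rfl
      exact hcw (hDuniq _ (hwC C hC) (hwb C hC).symm).symm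
    obtain ⟨z, hzb, hwz, hcz⟩ := hsq.exists_ne_common hcw.symm (hwb C hC) hc.1.symm
    have hzT : z ∉ T := fun hzT => hzb (hbuniq C hC z hzT hwz)
    rcases h.family.closed C (h𝒞₀𝒞 hC) _ (hwC C hC) z hwz with hzC | hzU
    · rcases h.family.closed D hD c hcD z hcz with hzD | hzU
      · exact absurd (h.family.eq_of_mem (h𝒞₀𝒞 hC) hD hzC hzD) hCD
      · exact absurd hzU (h.family.notMem C (h𝒞₀𝒞 hC) z hzC)
    · exact ⟨z, (mem_union.1 hzU).resolve_right hzT, hwz⟩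
  have hcommonAw : ∀ a ∈ A, ∀ C ∈ 𝒞₀, ∀ x, G.Adj a x → G.Adj (w C) x → x ∈ S := by
    intro a ha C hC x hax hwx
    rcases h.family.closed C (h𝒞₀𝒞 hC) _ (hwC C hC) x hwx with hxC | hxU
    · exact absurd ⟨x, hxC, a, ha, hax.symm⟩ (mem_filter.1 hC).2
    · exact (mem_union.1 hxU).resolve_right fun hxT => hindep a (hAT ha) x hxT hax
  have hhall : #(A ∪ 𝒞₀.image w) ≤ #(S ∪ B₂) := by
    refine hsq.card_le_of_common ?_ ?_
    · intro q hq
      rcases mem_union.1 hq with hq | hq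
      · obtain ⟨s, hs, hqs⟩ := hnbrA q hq
        exact ⟨s, mem_union_left _ hs, hqs⟩
      · obtain ⟨C, hC, rfl⟩ := mem_image.1 hq
        obtain ⟨s, hs, hqs⟩ := hnbrw C hC
        exact ⟨s, mem_union_left _ hs, hqs⟩
    · intro q hq r hr hne x hqx hrx
      rcases mem_union.1 hq with hq | hq <;> rcases mem_union.1 hr with hr | hr
      · refine mem_union_left _ ?_
        by_contra hxS
        by_cases hxT : x ∈ T
        · exact hindep q (hAT hq) x hxT hqx
        · exact hne (huniq x hxS hxT q (hAT hq) r (hAT hr) hqx.symm hrx.symm)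
      · obtain ⟨C, hC, rfl⟩ := mem_image.1 hr
        exact mem_union_left _ (hcommonAw q hq C hC x hqx hrx)
      · obtain ⟨C, hC, rfl⟩ := mem_image.1 hq
        exact mem_union_left _ (hcommonAw r hr C hC x hrx hqx)
      · obtain ⟨C, hC, rfl⟩ := mem_image.1 hq
        obtain ⟨D, hD, rfl⟩ := mem_image.1 hr
        have hCD : C ≠ D := fun hCD => hne (hCD ▸ rfl)
        have hxU : x ∈ S ∪ T := by
          rcases h.family.closed C (h𝒞₀𝒞 hC) _ (hwC C hC) x hqx with hxC | hxU
          · rcases h.family.closed D (h𝒞₀𝒞 hD) _ (hwC D hD) x hrx with hxD | hxU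
            · exact absurd (h.family.eq_of_mem (h𝒞₀𝒞 hC) (h𝒞₀𝒞 hD) hxC hxD) hCD
            · exact hxU
          · exact hxU
        rcases mem_union.1 hxU with hxS | hxT
        · exact mem_union_left _ hxS
        · have hxC := hbuniq C hC x hxT hqx
          have hxD := hbuniq D hD x hxT hrx
          refine mem_union_right _ (mem_filter.2 ⟨hxC ▸ hbB C hC, ?_⟩)
          exact one_lt_card.2 ⟨C, mem_filter.2 ⟨hC, hxC.symm⟩, D, mem_filter.2 ⟨hD, hxD.symm⟩, hCD⟩
  have hunion := card_union_le S B₂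
  have hsplitT := card_filter_add_card_filter_not (s := T)
    (fun t => #{w | G.Adj t w ∧ w ∉ S} ≤ 1)
  have hsplit𝒞 := card_filter_add_card_filter_not (s := 𝒞)
    (fun C => ∃ c ∈ C, ∃ a ∈ A, G.Adj c a)
  have hsumT := sum_filter_add_sum_filter_not T (fun t => #{w | G.Adj t w ∧ w ∉ S} ≤ 1)
    (fun t => #{w | G.Adj t w ∧ w ∉ S})
  have hsumB : 2 * #B ≤ ∑ t ∈ B, #{w | G.Adj t w ∧ w ∉ S} := by
    rw [mul_comm, ← smul_eq_mul, ← sum_const]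
    exact sum_le_sum fun t ht => not_le.1 (mem_filter.1 ht).2
  have hlt := h.card_lt
  rw [← hA, ← hB] at hsplitT hsumT
  rw [← h𝒞₁, ← h𝒞₀] at hsplit𝒞
  omega

end SQuadG

namespace SimpleGraph

section Tutte

variable {W : Type*} [Fintype W] [DecidableEq W] {Γ : SimpleGraph W}

/-- Tutte's theorem, with the odd components described as a closed family. -/
theorem exists_isClosedFamily_of_not_perfectMatching
    (h : ¬ ∃ M : Γ.Subgraph, M.IsPerfectMatching) :
    ∃ U 𝒞, IsClosedFamily Γ U 𝒞 ∧ (∀ C ∈ 𝒞, Odd #C) ∧ #U < #𝒞 := by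
  classical
  rw [tutte] at h
  push Not at h
  obtain ⟨u, hu⟩ := h
  set K := ((⊤ : Γ.Subgraph).deleteVerts u).coe with hK
  let f : K.ConnectedComponent → Finset W := fun c => (Set.image Subtype.val c.supp).toFinset
  have hmem : ∀ c x, x ∈ f c ↔ ∃ hx : x ∈ ((⊤ : Γ.Subgraph).deleteVerts u).verts,
      K.connectedComponentMk ⟨x, hx⟩ = c := by
    intro c x
    simp [f, ConnectedComponent.mem_supp_iff]
  have hcard : ∀ c, #(f c) = c.supp.ncard := by
    intro c
    rw [← Set.ncard_eq_toFinset_card', Set.ncard_image_of_injective _ Subtype.val_injective]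
  have hfeq : ∀ c d x, x ∈ f c → x ∈ f d → c = d := by
    intro c d x hc hd
    obtain ⟨_, rfl⟩ := (hmem c x).1 hc
    obtain ⟨_, rfl⟩ := (hmem d x).1 hd
    rfl
  have hfinj : Function.Injective f := by
    intro c d hcd
    obtain ⟨x, hx⟩ := c.nonempty_supp
    have hxc : x.1 ∈ f c := (hmem c x.1).2 ⟨x.2, hx⟩
    exact hfeq c d x.1 hxc (hcd ▸ hxc)
  refine ⟨u.toFinset, K.oddComponents.toFinset.image f, ⟨?_, ?_, ?_⟩, ?_, ?_⟩
  · intro C hC D hD hCD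
    obtain ⟨c, -, rfl⟩ := mem_image.1 (mem_coe.1 hC)
    obtain ⟨d, -, rfl⟩ := mem_image.1 (mem_coe.1 hD)
    refine Finset.disjoint_left.2 fun x hxc hxd => hCD ?_
    rw [hfeq c d x hxc hxd]
  · intro C hC x hx
    obtain ⟨c, -, rfl⟩ := mem_image.1 hC
    obtain ⟨hxu, -⟩ := (hmem c x).1 hx
    simpa using hxu
  · intro C hC x hx w hxw
    obtain ⟨c, -, rfl⟩ := mem_image.1 hC
    obtain ⟨hxu, rfl⟩ := (hmem c x).1 hx
    by_cases hw : w ∈ u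
    · exact Or.inr (by simpa using hw)
    · refine Or.inl ((hmem _ w).2 ⟨by simpa using hw, ?_⟩)
      refine ConnectedComponent.connectedComponentMk_eq_of_adj ?_
      have hxu' : x ∉ u := by simpa using hxu
      simp [hK, hxw.symm, hw, hxu']
  · intro C hC
    obtain ⟨c, hc, rfl⟩ := mem_image.1 hC
    rw [hcard]
    simpa using hc
  · rw [card_image_of_injective _ hfinj, ← Set.ncard_eq_toFinset_card',
      ← Set.ncard_eq_toFinset_card']
    exact hu

/-- In a minimal violation of Tutte's condition, every deleted vertex is adjacent to at least
three odd components. -/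
theorem IsClosedFamily.exists_minimal (heven : Even (Fintype.card W)) {U : Finset W}
    {𝒞 : Finset (Finset W)} (h : IsClosedFamily Γ U 𝒞) (hodd : ∀ C ∈ 𝒞, Odd #C)
    (hlt : #U < #𝒞) :
    ∃ U 𝒞, IsClosedFamily Γ U 𝒞 ∧ (∀ C ∈ 𝒞, Odd #C) ∧ #U < #𝒞 ∧
      ∀ u ∈ U, ∃ C ∈ 𝒞, ∃ D ∈ 𝒞, ∃ E ∈ 𝒞, C ≠ D ∧ C ≠ E ∧ D ≠ E ∧
        (∃ c ∈ C, Γ.Adj u c) ∧ (∃ c ∈ D, Γ.Adj u c) ∧ ∃ c ∈ E, Γ.Adj u c := by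
  classical
  induction hm : #U using Nat.strong_induction_on generalizing U 𝒞 with
  | _ m ih =>
    obtain ⟨𝒟, h𝒟, h𝒟odd, h2⟩ : ∃ 𝒟, IsClosedFamily Γ U 𝒟 ∧ (∀ C ∈ 𝒟, Odd #C) ∧
        #U + 2 ≤ #𝒟 := by
      by_cases h2 : #U + 2 ≤ #𝒞
      · exact ⟨𝒞, h, hodd, h2⟩
      have hsum := h.sum_add_sum_rest fun _ => 1
      simp only [sum_const, smul_eq_mul, mul_one, card_univ] at hsum
      have h𝒞 : Odd (∑ C ∈ 𝒞, #C) ↔ Odd #𝒞 := by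
        rw [odd_sum_iff_odd_card_odd, filter_true_of_mem hodd]
      have hrest : Odd #(IsClosedFamily.rest U 𝒞) := by
        rw [Nat.odd_iff, Nat.odd_iff] at h𝒞
        rw [Nat.even_iff] at heven
        rw [Nat.odd_iff]
        omega
      refine ⟨_, h.insert_rest, ?_, ?_⟩
      · intro C hC
        rcases mem_insert.1 hC with rfl | hC
        · exact hrest
        · exact hodd C hC
      · rw [IsClosedFamily.card_insert_rest (card_pos.1 hrest.pos)]
        omega
    by_cases hcon : ∀ u ∈ U, 2 < #{C ∈ 𝒟 | ∃ c ∈ C, Γ.Adj u c}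
    · refine ⟨U, 𝒟, h𝒟, h𝒟odd, by omega, fun u hu => ?_⟩
      obtain ⟨C, D, E, hC, hD, hE, hCD, hCE, hDE⟩ := two_lt_card_iff.1 (hcon u hu)
      rw [mem_filter] at hC hD hE
      exact ⟨C, hC.1, D, hD.1, E, hE.1, hCD, hCE, hDE, hC.2, hD.2, hE.2⟩
    · push Not at hcon
      obtain ⟨u, hu, hle⟩ := hcon
      have hcardU := card_erase_add_one hu
      have hsplit := card_filter_add_card_filter_not (s := 𝒟) (fun C => ∃ c ∈ C, Γ.Adj u c)
      refine ih _ (by omega) (U := U.erase u) (𝒞 := {C ∈ 𝒟 | ¬ ∃ c ∈ C, Γ.Adj u c})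
        (h𝒟.of_subset (erase_subset _ _) (filter_subset _ _) ?_)
        (fun C hC => h𝒟odd C (mem_filter.1 hC).1) (by omega) rfl
      intro C hC c hc v hv hcv
      refine mem_erase.2 ⟨?_, hv⟩
      rintro rfl
      exact (mem_filter.1 hC).2 ⟨c, hc, hcv.symm⟩

end Tutte

section Gadget

variable {V : Type*}

/-- The graph whose perfect matchings encode the 2-factors of `G`: each vertex of `G` becomes two
twins joined to all darts leaving it, and each dart is joined to its reverse. -/
def twoFactorGadget (G : SimpleGraph V) : SimpleGraph (G.Dart ⊕ V × Bool) where
  Adj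
    | .inl d, .inl e => e = d.symm
    | .inl d, .inr p => d.fst = p.1
    | .inr p, .inl d => d.fst = p.1
    | .inr _, .inr _ => False
  symm := ⟨by
    rintro (d | p) (e | q) h
    · exact h ▸ (d.symm_symm).symm
    · exact h
    · exact h
    · exact h⟩
  loopless := ⟨by
    rintro (d | p) h
    · exact d.symm_ne h.symm
    · exact h⟩

variable {G : SimpleGraph V}

@[simp]
theorem twoFactorGadget_adj_inl_inl {d e : G.Dart} :
    G.twoFactorGadget.Adj (.inl d) (.inl e) ↔ e = d.symm := Iff.rfl

@[simp]
theorem twoFactorGadget_adj_inl_inr {d : G.Dart} {p : V × Bool} :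
    G.twoFactorGadget.Adj (.inl d) (.inr p) ↔ d.fst = p.1 := Iff.rfl

@[simp]
theorem twoFactorGadget_adj_inr_inl {d : G.Dart} {p : V × Bool} :
    G.twoFactorGadget.Adj (.inr p) (.inl d) ↔ d.fst = p.1 := Iff.rfl

@[simp]
theorem twoFactorGadget_adj_inr_inr {p q : V × Bool} :
    ¬ G.twoFactorGadget.Adj (.inr p) (.inr q) := id

theorem exists_twoFactor_of_perfectMatching {M : G.twoFactorGadget.Subgraph}
    (hM : M.IsPerfectMatching) :
    ∃ H : SimpleGraph V, H ≤ G ∧ ∀ v : V, (H.neighborSet v).ncard = 2 := by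
  rw [Subgraph.isPerfectMatching_iff] at hM
  have huniq : ∀ {x y z}, M.Adj x y → M.Adj x z → y = z := fun hy hz => (hM _).unique hy hz
  have hcore : ∀ v i, ∃ d : G.Dart, d.fst = v ∧ M.Adj (.inr (v, i)) (.inl d) := by
    intro v i
    obtain ⟨d | q, hd, -⟩ := hM (.inr (v, i))
    · exact ⟨d, M.adj_sub hd, hd⟩
    · exact absurd (M.adj_sub hd) twoFactorGadget_adj_inr_inr
  choose f hfst hf using hcore
  let H : SimpleGraph V :=
    { Adj := fun u v => ∃ d : G.Dart, d.fst = u ∧ d.snd = v ∧ ¬ M.Adj (.inl d) (.inl d.symm)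
      symm := ⟨by
        rintro u v ⟨d, rfl, rfl, hd⟩
        refine ⟨d.symm, rfl, rfl, fun h => hd ?_⟩
        rw [Dart.symm_symm] at h
        exact h.symm⟩
      loopless := ⟨by
        rintro u ⟨d, hu, hv, -⟩
        exact d.fst_ne_snd (hu.trans hv.symm)⟩ }
  have hH : ∀ u v, H.Adj u v ↔
      ∃ d : G.Dart, d.fst = u ∧ d.snd = v ∧ ¬ M.Adj (.inl d) (.inl d.symm) := fun _ _ => Iff.rfl
  refine ⟨H, ?_, fun v => ?_⟩
  · intro u v huv
    obtain ⟨d, rfl, rfl, -⟩ := (hH u v).1 huv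
    exact d.adj
  · have hne : (f v false).snd ≠ (f v true).snd := by
      intro heq
      have hd : f v false = f v true :=
        Dart.ext _ _ (Prod.ext ((hfst v false).trans (hfst v true).symm) heq)
      have := huniq (hf v false).symm (hd ▸ (hf v true).symm)
      simp at this
    rw [← Set.ncard_pair hne]
    congr 1
    ext w
    rw [mem_neighborSet, hH]
    constructor
    · rintro ⟨d, rfl, rfl, hd⟩
      obtain ⟨e | ⟨v, i⟩, he, -⟩ := hM (.inl d)
      · have : e = d.symm := M.adj_sub he
        exact absurd (this ▸ he) hd
      · obtain rfl : d.fst = v := M.adj_sub he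
        have hdi := Sum.inl_injective (huniq he.symm (hf d.fst i))
        cases i
        · exact Or.inl (congrArg (fun e : G.Dart => e.snd) hdi)
        · exact Or.inr (congrArg (fun e : G.Dart => e.snd) hdi)
    · have key : ∀ i, ¬ M.Adj (.inl (f v i)) (.inl (f v i).symm) := by
        intro i hi
        have := huniq hi (hf v i).symm
        simp at this
      rintro (rfl | rfl)
      · exact ⟨f v false, hfst v false, rfl, key false⟩
      · exact ⟨f v true, hfst v true, rfl, key true⟩

variable [Fintype V] [DecidableRel G.Adj]

theorem even_card_twoFactorGadget : Even (Fintype.card (G.Dart ⊕ V × Bool)) := by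
  rw [Fintype.card_sum, Fintype.card_prod, Fintype.card_bool, ← card_univ (α := G.Dart)]
  refine Even.add ?_ (even_two.mul_left _)
  exact even_card_of_involution Dart.symm (fun _ _ => mem_univ _) Dart.symm_symm Dart.symm_ne

variable [DecidableEq V]

/-- A graph without a 2-factor has a barrier. -/
theorem exists_isTwoFactorBarrier
    (hno : ¬ ∃ H : SimpleGraph V, H ≤ G ∧ ∀ v : V, (H.neighborSet v).ncard = 2) :
    ∃ S T 𝒞, IsTwoFactorBarrier G S T 𝒞 := by
  have hpm : ¬ ∃ M : G.twoFactorGadget.Subgraph, M.IsPerfectMatching := fun ⟨M, hM⟩ =>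
    hno (exists_twoFactor_of_perfectMatching hM)
  obtain ⟨U₀, 𝒞₀, hfam₀, hodd₀, hlt₀⟩ := exists_isClosedFamily_of_not_perfectMatching hpm
  obtain ⟨U, 𝒞, hfam, hodd, hlt, hthree⟩ :=
    hfam₀.exists_minimal even_card_twoFactorGadget hodd₀ hlt₀
  -- The three neighbors of a deleted dart lie in three different parts.
  have hdart : ∀ d : G.Dart, .inl d ∈ U → (∃ C ∈ 𝒞, .inl d.symm ∈ C) ∧
      ∃ C ∈ 𝒞, ∃ D ∈ 𝒞, C ≠ D ∧ .inr (d.fst, false) ∈ C ∧ .inr (d.fst, true) ∈ D := by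
    intro d hd
    obtain ⟨C, hC, D, hD, E, hE, hCD, hCE, hDE, ⟨x, hx, hdx⟩, ⟨y, hy, hdy⟩, ⟨z, hz, hdz⟩⟩ :=
      hthree _ hd
    have hnbr : ∀ x, G.twoFactorGadget.Adj (.inl d) x →
        x = .inl d.symm ∨ x = .inr (d.fst, false) ∨ x = .inr (d.fst, true) := by
      rintro (e | ⟨v, i⟩) he
      · exact Or.inl (congrArg _ he)
      · obtain rfl : d.fst = v := he
        cases i <;> simp
    have hxy : x ≠ y := fun h => hCD (hfam.eq_of_mem hC hD hx (h ▸ hy))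
    have hxz : x ≠ z := fun h => hCE (hfam.eq_of_mem hC hE hx (h ▸ hz))
    have hyz : y ≠ z := fun h => hDE (hfam.eq_of_mem hD hE hy (h ▸ hz))
    rcases hnbr x hdx with rfl | rfl | rfl <;> rcases hnbr y hdy with rfl | rfl | rfl <;>
      rcases hnbr z hdz with rfl | rfl | rfl <;> first
        | exact absurd rfl hxy
        | exact absurd rfl hxz
        | exact absurd rfl hyz
        | exact ⟨⟨C, hC, hx⟩, D, hD, E, hE, hDE, hy, hz⟩
        | exact ⟨⟨C, hC, hx⟩, E, hE, D, hD, hDE.symm, hz, hy⟩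
        | exact ⟨⟨D, hD, hy⟩, C, hC, E, hE, hCE, hx, hz⟩
        | exact ⟨⟨D, hD, hy⟩, E, hE, C, hC, hCE.symm, hz, hx⟩
        | exact ⟨⟨E, hE, hz⟩, C, hC, D, hD, hCD, hx, hy⟩
        | exact ⟨⟨E, hE, hz⟩, D, hD, C, hC, hCD.symm, hy, hx⟩
  have htwin : ∀ v i j, .inr (v, i) ∈ U → .inr (v, j) ∈ U := by
    intro v i j hv
    by_contra hj
    obtain ⟨C, hC, D, hD, -, -, hCD, -, -, ⟨x, hx, hvx⟩, ⟨y, hy, hvy⟩, -⟩ := hthree _ hv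
    have key : ∀ C ∈ 𝒞, ∀ x ∈ C, G.twoFactorGadget.Adj (.inr (v, i)) x → .inr (v, j) ∈ C := by
      rintro C hC (d | q) hx hvx
      · exact (hfam.closed C hC _ hx (.inr (v, j)) hvx).resolve_right hj
      · exact absurd hvx twoFactorGadget_adj_inr_inr
    exact hCD (hfam.eq_of_mem hC hD (key C hC x hx hvx) (key D hD y hy hvy))
  set S : Finset V := {v | .inr (v, false) ∈ U} with hS
  set T : Finset V := {v | .inr (v, false) ∉ U ∧ ∀ d : G.Dart, d.fst = v → .inl d ∈ U} with hT
  have hUS : ∀ v i, .inr (v, i) ∈ U ↔ v ∈ S := by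
    intro v i
    rw [hS, mem_filter]
    exact ⟨fun h => ⟨mem_univ _, htwin _ _ _ h⟩, fun h => htwin _ _ _ h.2⟩
  have hUT : ∀ d : G.Dart, .inl d ∈ U ↔ d.fst ∈ T := by
    intro d
    rw [hT, mem_filter]
    refine ⟨fun hd => ⟨mem_univ _, ?_⟩, fun h => h.2.2 d rfl⟩
    obtain ⟨-, C, hC, D, hD, hCD, hvC, hvD⟩ := hdart d hd
    refine ⟨hfam.notMem C hC _ hvC, fun e he => ?_⟩
    by_contra heU
    refine hCD (hfam.eq_of_mem hC hD (x := .inl e) ?_ ?_)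
    · exact (hfam.closed C hC _ hvC (.inl e) he).resolve_right heU
    · exact (hfam.closed D hD _ hvD (.inl e) he).resolve_right heU
  have hST : Disjoint S T := by
    rw [Finset.disjoint_left]
    intro v hv hv'
    exact (mem_filter.1 hv').2.1 (mem_filter.1 hv).2
  have hnS : ∀ C ∈ 𝒞, ∀ v i, .inr (v, i) ∈ C → v ∉ S := fun C hC v i hv hvS =>
    hfam.notMem C hC _ hv ((hUS v i).2 hvS)
  have hcore_dart : ∀ C ∈ 𝒞, ∀ v i, .inr (v, i) ∈ C → v ∉ T → ∀ d : G.Dart, d.fst = v →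
      .inl d ∈ C := by
    intro C hC v i hv hvT d hd
    refine (hfam.closed C hC _ hv (.inl d) hd).resolve_right fun hdU => hvT ?_
    exact hd ▸ (hUT d).1 hdU
  have hdart_core : ∀ C ∈ 𝒞, ∀ d : G.Dart, .inl d ∈ C → d.fst ∉ S → ∀ i,
      .inr (d.fst, i) ∈ C := by
    intro C hC d hd hdS i
    refine (hfam.closed C hC _ hd (.inr (d.fst, i)) rfl).resolve_right fun hU => hdS ?_
    exact (hUS _ _).1 hU
  have hdart_symm : ∀ C ∈ 𝒞, ∀ d : G.Dart, .inl d ∈ C → d.snd ∉ T → .inl d.symm ∈ C := by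
    intro C hC d hd hdT
    exact (hfam.closed C hC _ hd (.inl d.symm) rfl).resolve_right fun hU => hdT ((hUT _).1 hU)
  set 𝒞T : Finset (Finset (G.Dart ⊕ V × Bool)) :=
    {C ∈ 𝒞 | ∃ p ∈ T ×ˢ (univ : Finset Bool), .inr p ∈ C} with h𝒞T
  set 𝒞ST : Finset (Finset (G.Dart ⊕ V × Bool)) :=
    {C ∈ 𝒞 | ∃ d ∈ ({d | d.fst ∈ T ∧ d.snd ∈ S} : Finset G.Dart), .inl d.symm ∈ C} with h𝒞ST
  set 𝒟 : Finset (Finset (G.Dart ⊕ V × Bool)) := 𝒞 \ (𝒞T ∪ 𝒞ST) with h𝒟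
  have h𝒟𝒞 : 𝒟 ⊆ 𝒞 := sdiff_subset
  have h𝒟T : ∀ C ∈ 𝒟, ∀ v i, .inr (v, i) ∈ C → v ∉ T := by
    intro C hC v i hv hvT
    rw [h𝒟, mem_sdiff, mem_union, not_or] at hC
    exact hC.2.1 (mem_filter.2 ⟨hC.1, (v, i), by simpa using hvT, hv⟩)
  have h𝒟ST : ∀ C ∈ 𝒟, ∀ d : G.Dart, .inl d ∈ C → d.snd ∈ T → d.fst ∉ S := by
    intro C hC d hd hdT hdS
    rw [h𝒟, mem_sdiff, mem_union, not_or] at hC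
    exact hC.2.2 (mem_filter.2 ⟨hC.1, d.symm, by simpa using ⟨hdT, hdS⟩,
      by rwa [Dart.symm_symm]⟩)
  let π : Finset (G.Dart ⊕ V × Bool) → Finset V := fun C => {v | .inr (v, false) ∈ C}
  have hπ : ∀ C v, v ∈ π C ↔ .inr (v, false) ∈ C := by
    intro C v
    simp [π]
  have hcore_twin : ∀ C ∈ 𝒟, ∀ v i j, .inr (v, i) ∈ C → .inr (v, j) ∈ C := by
    intro C hC v i j hv
    have hvS := hnS C (h𝒟𝒞 hC) v i hv
    have hvT := h𝒟T C hC v i hv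
    obtain ⟨d, rfl⟩ : ∃ d : G.Dart, d.fst = v := by
      by_contra! hcon
      refine hvT (mem_filter.2 ⟨mem_univ _, fun hU => hvS ((hUS _ _).1 hU), fun d hd => ?_⟩)
      exact absurd hd (hcon d)
    exact hdart_core C (h𝒟𝒞 hC) d (hcore_dart C (h𝒟𝒞 hC) _ i hv hvT d rfl) hvS j
  have hπodd : ∀ C ∈ 𝒟, Odd (∑ c ∈ π C, #{t ∈ T | G.Adj c t}) := by
    intro C hC
    have hCd : C = ({d | .inl d ∈ C} : Finset G.Dart).disjSum (π C ×ˢ univ) := by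
      ext x
      rcases x with d | ⟨v, i⟩
      · simp
      · simp only [inr_mem_disjSum, mem_product, mem_univ, and_true, hπ]
        exact ⟨hcore_twin C hC v i false, hcore_twin C hC v false i⟩
    have hcardC : #C = #{d : G.Dart | .inl d ∈ C} + #(π C) * 2 := by
      conv_lhs => rw [hCd]
      rw [card_disjSum, card_product, card_univ, Fintype.card_bool]
    have hsplit := card_filter_add_card_filter_not
      (s := ({d | .inl d ∈ C} : Finset G.Dart)) (fun d => .inl d.symm ∈ C)
    have heven : Even #{d ∈ ({d | .inl d ∈ C} : Finset G.Dart) | .inl d.symm ∈ C} := by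
      refine even_card_of_involution Dart.symm ?_ Dart.symm_symm Dart.symm_ne
      intro d hd
      simpa [and_comm] using hd
    have hcross : {d ∈ ({d | .inl d ∈ C} : Finset G.Dart) | .inl d.symm ∉ C} =
        ({d | d.fst ∈ π C ∧ d.snd ∈ T} : Finset G.Dart) := by
      ext d
      simp only [mem_filter, mem_univ, true_and, hπ]
      constructor
      · rintro ⟨hd, hd'⟩
        have hdT : d.snd ∈ T := by
          by_contra hdT
          exact hd' (hdart_symm C (h𝒟𝒞 hC) d hd hdT)
        exact ⟨hdart_core C (h𝒟𝒞 hC) d hd (h𝒟ST C hC d hd hdT) false, hdT⟩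
      · rintro ⟨hd, hdT⟩
        refine ⟨hcore_dart C (h𝒟𝒞 hC) _ _ hd (h𝒟T C hC _ _ hd) d rfl, fun hmem => ?_⟩
        exact hfam.notMem C (h𝒟𝒞 hC) _ hmem ((hUT d.symm).2 hdT)
    rw [← card_darts, ← hcross]
    have hoddC := hodd C (h𝒟𝒞 hC)
    rw [Nat.odd_iff] at hoddC ⊢
    rw [Nat.even_iff] at heven
    omega
  have hπeq : ∀ C ∈ 𝒟, ∀ D ∈ 𝒟, ∀ v, v ∈ π C → v ∈ π D → C = D := fun C hC D hD v hvC hvD =>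
    hfam.eq_of_mem (h𝒟𝒞 hC) (h𝒟𝒞 hD) ((hπ C v).1 hvC) ((hπ D v).1 hvD)
  have hπinj : Set.InjOn π 𝒟 := by
    intro C hC D hD hCD
    obtain ⟨v, hv, -⟩ := exists_ne_zero_of_sum_ne_zero (hπodd C hC).pos.ne'
    exact hπeq C hC D hD v hv (hCD ▸ hv)
  refine ⟨S, T, 𝒟.image π, ⟨?_, ?_, ?_⟩, hST, ?_, ?_⟩
  · intro P hP Q hQ hPQ
    obtain ⟨C, hC, rfl⟩ := mem_image.1 (mem_coe.1 hP)
    obtain ⟨D, hD, rfl⟩ := mem_image.1 (mem_coe.1 hQ)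
    refine Finset.disjoint_left.2 fun v hvC hvD => hPQ ?_
    rw [hπeq C hC D hD v hvC hvD]
  · intro P hP v hv
    obtain ⟨C, hC, rfl⟩ := mem_image.1 hP
    rw [hπ] at hv
    rw [mem_union, not_or]
    exact ⟨hnS C (h𝒟𝒞 hC) v _ hv, h𝒟T C hC v _ hv⟩
  · intro P hP v hv w hvw
    obtain ⟨C, hC, rfl⟩ := mem_image.1 hP
    rw [hπ] at hv
    by_contra! hcon
    rw [hπ, mem_union, not_or] at hcon
    refine hcon.1 (hdart_core C (h𝒟𝒞 hC) ⟨(w, v), hvw.symm⟩ ?_ hcon.2.1 false)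
    refine hdart_symm C (h𝒟𝒞 hC) ⟨(v, w), hvw⟩ ?_ hcon.2.2
    exact hcore_dart C (h𝒟𝒞 hC) v _ hv (h𝒟T C hC v _ hv) _ rfl
  · intro P hP
    obtain ⟨C, hC, rfl⟩ := mem_image.1 hP
    exact hπodd C hC
  · rw [card_image_of_injOn hπinj]
    have hU : U = ({d | d.fst ∈ T} : Finset G.Dart).disjSum (S ×ˢ univ) := by
      ext x
      rcases x with d | ⟨v, i⟩
      · simp [hUT]
      · simp [hUS]
    have hcardU : #U = #{d : G.Dart | d.fst ∈ T} + #S * 2 := by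
      rw [hU, card_disjSum, card_product, card_univ, Fintype.card_bool]
    have hsplit := card_filter_add_card_filter_not
      (s := ({d | d.fst ∈ T} : Finset G.Dart)) (fun d => d.snd ∈ S)
    rw [filter_filter, filter_filter] at hsplit
    have hout : #{d : G.Dart | d.fst ∈ T ∧ d.snd ∉ S} = ∑ t ∈ T, #{w | G.Adj t w ∧ w ∉ S} := by
      have := card_darts G T Sᶜ
      simp only [mem_compl] at this
      rw [this]
      refine sum_congr rfl fun t _ => ?_
      congr 1
      ext w
      simp [and_comm]
    have h𝒞T_card : #𝒞T ≤ #T * 2 := by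
      have := hfam.card_le (X := T ×ˢ (univ : Finset Bool)) Sum.inr (filter_subset _ _)
        (fun C hC => (mem_filter.1 hC).2 : ∀ C ∈ 𝒞T, _)
      rwa [card_product, card_univ, Fintype.card_bool] at this
    have h𝒞ST_card : #𝒞ST ≤ #{d : G.Dart | d.fst ∈ T ∧ d.snd ∈ S} :=
      hfam.card_le (fun d : G.Dart => Sum.inl d.symm) (filter_subset _ _)
        fun C hC => (mem_filter.1 hC).2
    have hle := le_card_sdiff (𝒞T ∪ 𝒞ST) 𝒞
    have hunion := card_union_le 𝒞T 𝒞ST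
    rw [← h𝒟] at hle
    omega

end Gadget

end SimpleGraph

/-- Every connected s-quadrangular graph with at least three vertices contains
a 2-factor (a spanning subgraph in which every vertex has degree exactly 2). -/
theorem connected_squad_two_factor {V : Type*} [Fintype V] (G : SimpleGraph V)
    (hconn : G.Connected) (hcard : 3 ≤ Fintype.card V) (hsq : SQuadG G) :
    ∃ H : SimpleGraph V, H ≤ G ∧ ∀ v : V, (H.neighborSet v).ncard = 2 := by
  classical
  by_contra hno
  obtain ⟨S, T, 𝒞, h⟩ := SimpleGraph.exists_isTwoFactorBarrier hno
  exact hsq.not_isTwoFactorBarrier hconn hcard S T 𝒞 h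
end

section
/- If G is a connected s-quadrangular graph in which every vertex has degree at most 4, then G is hamiltonian. -/
namespace SimpleGraph

open Equiv

attribute [local simp] Perm.SameCycle.refl

/-- If a set of vertices of a connected graph is nonempty and closed under adjacency, it is
everything. -/
theorem Connected.forall_of_adj_closed {V : Type*} {G : SimpleGraph V} (hconn : G.Connected)
    {P : V → Prop} {x : V} (hx : P x)
    (hP : ∀ u v, P u → G.Adj u v → P v) (v : V) : P v := by
  obtain ⟨p⟩ := hconn.preconnected x v
  induction p with
  | nil => exact hx
  | cons h _ ih => exact ih (hP _ _ hx h)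

section Hamiltonian

variable {V : Type*} [Fintype V] [DecidableEq V] {G : SimpleGraph V}

/-- A cyclic enumeration of the vertices by consecutive adjacent vertices yields a Hamiltonian
cycle. -/
theorem isHamiltonian_of_cyclic_enumeration (hcard : 3 ≤ Fintype.card V) (b : ℕ → V)
    (hinj : ∀ i < Fintype.card V, ∀ j < Fintype.card V, b i = b j → i = j)
    (hadj : ∀ i, i + 1 < Fintype.card V → G.Adj (b i) (b (i + 1)))
    (hlast : G.Adj (b (Fintype.card V - 1)) (b 0)) : G.IsHamiltonian := by
  intro _
  obtain ⟨n, hn⟩ := Nat.exists_eq_add_of_le' hcard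
  rw [hn] at hinj hadj hlast
  have hsucc : ∀ i : Fin (n + 3), G.Adj (b i) (b (i + 1 : Fin (n + 3))) := by
    intro i
    rw [Fin.val_add_one]
    split_ifs with h
    · simpa [h] using hlast
    · have : (i : ℕ) ≠ n + 2 := fun h' ↦ h (Fin.ext (by simpa using h'))
      exact hadj i (by omega)
  let f : cycleGraph (n + 3) →g G :=
    { toFun := fun i ↦ b i
      map_rel' := by
        intro u v huv
        rw [cycleGraph_adj] at huv
        rcases huv with h | h
        · rw [sub_eq_iff_eq_add'.mp h]
          exact (hsucc v).symm
        · rw [sub_eq_iff_eq_add'.mp h]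
          exact hsucc u }
  have hf : Function.Injective f := fun i j hij ↦ Fin.ext (hinj i i.2 j j.2 hij)
  refine ⟨_, (cycleGraph.cycle n).map f, ?_⟩
  rw [Walk.isHamiltonianCycle_iff_isCycle_and_length_eq]
  exact ⟨cycleGraph.isCycle_cycle.map hf, by simp [hn]⟩

/-- A permutation moving each vertex to a neighbor and acting transitively yields a Hamiltonian
cycle. -/
theorem isHamiltonian_of_sameCycle (hcard : 3 ≤ Fintype.card V) (π : Perm V)
    (hπ : ∀ v, G.Adj v (π v)) (hone : ∀ a b, π.SameCycle a b) : G.IsHamiltonian := by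
  have hne : Nonempty V := Fintype.card_pos_iff.mp (by omega)
  obtain ⟨v⟩ := hne
  have hcyc : π.IsCycle := ⟨v, (hπ v).ne', fun y _ ↦ hone v y⟩
  have hord : orderOf π = Fintype.card V := by
    rw [hcyc.orderOf, ← Finset.card_univ]
    congr 1
    ext y
    simp [(hπ y).ne']
  have hstep : ∀ i, G.Adj ((π ^ i) v) ((π ^ (i + 1)) v) := fun i ↦ by
    rw [pow_succ', Perm.mul_apply]
    exact hπ _
  refine isHamiltonian_of_cyclic_enumeration hcard (fun i ↦ (π ^ i) v) ?_ (fun i _ ↦ hstep i) ?_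
  · intro i hi j hj hij
    rw [← hord] at hi hj
    exact pow_injOn_Iio_orderOf hi hj (hcyc.pow_eq_pow_iff.mpr ⟨v, (hπ v).ne', hij⟩)
  · have := hstep (Fintype.card V - 1)
    rwa [Nat.sub_add_cancel (by omega), ← hord, pow_orderOf_eq_one, ← pow_zero π, hord] at this

/-- Among five neighbors of a vertex of degree at most four, two coincide. -/
theorem eq_of_adj_of_ncard_neighborSet_le_four (hdeg : ∀ v : V, (G.neighborSet v).ncard ≤ 4)
    {v a b c d e : V} (ha : G.Adj v a) (hb : G.Adj v b) (hc : G.Adj v c) (hd : G.Adj v d)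
    (he : G.Adj v e) (hab : a ≠ b) (hac : a ≠ c) (had : a ≠ d) (hbc : b ≠ c) (hbd : b ≠ d)
    (hcd : c ≠ d) : e = a ∨ e = b ∨ e = c ∨ e = d := by
  by_contra! h
  obtain ⟨h1, h2, h3, h4⟩ := h
  have hsub : (({e, a, b, c, d} : Finset V) : Set V) ⊆ G.neighborSet v := by
    intro w hw
    simp only [Finset.coe_insert, Finset.coe_singleton, Set.mem_insert_iff,
      Set.mem_singleton_iff] at hw
    rcases hw with rfl | rfl | rfl | rfl | rfl <;> assumption
  have hle := Set.ncard_le_ncard hsub (Set.toFinite _)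
  have hcard : ({e, a, b, c, d} : Finset V).card = 5 := by
    rw [Finset.card_insert_of_notMem, Finset.card_insert_of_notMem, Finset.card_insert_of_notMem,
      Finset.card_insert_of_notMem, Finset.card_singleton] <;> simp [*]
  rw [Set.ncard_coe_finset, hcard] at hle
  have := hdeg v
  omega

end Hamiltonian

section SQuad

variable {V : Type*} [Fintype V] [DecidableEq V] {G : SimpleGraph V}

/-- Two vertices with a common neighbor have a second one. -/
theorem _root_.SQuadG.exists_ne_adj_adj (hsq : SQuadG G) {u v w : V} (huv : u ≠ v)
    (hu : G.Adj u w) (hv : G.Adj v w) : ∃ z, z ≠ w ∧ G.Adj u z ∧ G.Adj v z := by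
  by_contra! h
  have hS := hsq {u, v} (by rw [Set.ncard_pair huv]) (by
    rintro a (rfl | rfl)
    · exact ⟨v, by simp, huv.symm, w, hu, hv⟩
    · exact ⟨u, by simp, huv, w, hv, hu⟩)
  have hsub : commonUnionG G {u, v} ⊆ {w} := by
    rintro z ⟨a, ha, b, hb, hab, haz, hbz⟩
    by_contra hz
    rcases ha with rfl | rfl <;> rcases hb with rfl | rfl
    · exact hab rfl
    · exact h z hz haz hbz
    · exact h z hz hbz haz
    · exact hab rfl
  have := Set.ncard_le_ncard hsub
  rw [Set.ncard_pair huv] at hS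
  rw [Set.ncard_singleton] at this
  omega

/-- If two of three vertices with a common neighbor share with the third one only neighbors among
`y` and `z`, they share with each other a neighbor other than `y` and `z`. -/
theorem _root_.SQuadG.exists_adj_adj_of_triple (hsq : SQuadG G) {x a b w y z : V}
    (hxa : x ≠ a) (hxb : x ≠ b) (hab : a ≠ b) (hx : G.Adj x w) (ha : G.Adj a w) (hb : G.Adj b w)
    (hxa' : ∀ t, G.Adj x t → G.Adj a t → t = y ∨ t = z)
    (hxb' : ∀ t, G.Adj x t → G.Adj b t → t = y ∨ t = z) :
    ∃ t, t ≠ y ∧ t ≠ z ∧ G.Adj a t ∧ G.Adj b t := by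
  by_contra! h
  have h3 : ({x, a, b} : Set V).ncard = 3 := Set.ncard_eq_three.mpr ⟨x, a, b, hxa, hxb, hab, rfl⟩
  have hS := hsq {x, a, b} (by omega) (by
    rintro c (rfl | rfl | rfl)
    · exact ⟨a, by simp, hxa.symm, w, hx, ha⟩
    · exact ⟨x, by simp, hxa, w, ha, hx⟩
    · exact ⟨x, by simp, hxb, w, hb, hx⟩)
  have hsub : commonUnionG G {x, a, b} ⊆ {y, z} := by
    rintro t ⟨c, hc, d, hd, hcd, hct, hdt⟩
    have hab' : G.Adj a t → G.Adj b t → t = y ∨ t = z := fun h1 h2 ↦ by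
      by_contra! h'
      exact h t h'.1 h'.2 h1 h2
    rcases hc with rfl | rfl | rfl <;> rcases hd with rfl | rfl | rfl <;>
      simp only [Set.mem_insert_iff, Set.mem_singleton_iff] <;> grind
  have h2 := Set.ncard_le_ncard hsub
  have h4 : ({y, z} : Set V).ncard ≤ 2 := (Set.ncard_insert_le _ _).trans (by simp)
  omega

/-- An s-quadrangular graph without isolated vertices has a permutation of its vertices moving each
vertex to a neighbor. -/
theorem _root_.SQuadG.exists_perm_adj (hsq : SQuadG G) (hpos : ∀ v, ∃ w, G.Adj v w) :
    ∃ π : Perm V, ∀ v, G.Adj v (π v) := by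
  classical
  choose f hf using hpos
  have hall : ∀ s : Finset V, s.card ≤ (s.biUnion fun v ↦ G.neighborFinset v).card := by
    intro s
    let shares : V → Prop := fun u ↦ ∃ v ∈ s, v ≠ u ∧ (G.neighborSet u ∩ G.neighborSet v).Nonempty
    let S : Set V := {u | u ∈ s ∧ shares u}
    have hS1 : S.ncard ≤ (commonUnionG G S).ncard := by
      rcases S.eq_empty_or_nonempty with h | ⟨u, hu, v, hv, hvu, w, hw⟩
      · simp [h]
      · have huS : u ∈ S := ⟨hu, v, hv, hvu, w, hw⟩
        have hvS : v ∈ S := ⟨hv, u, hu, hvu.symm, w, hw.symm⟩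
        refine hsq S ?_ ?_
        · rw [← Set.ncard_pair hvu]
          exact Set.ncard_le_ncard (by rintro a (rfl | rfl) <;> assumption)
        · rintro a ⟨ha, b, hb, hba, c, hc⟩
          exact ⟨b, ⟨hb, a, ha, hba.symm, c, hc.symm⟩, hba, c, hc⟩
    let T : Finset V := s.filter fun u ↦ ¬ shares u
    have hinj : Set.InjOn f (T : Set V) := by
      intro a ha b hb hab
      simp only [T, Finset.coe_filter, Set.mem_ofPred_eq] at ha hb
      by_contra hne
      refine ha.2 ⟨b, hb.1, Ne.symm hne, f a, hf a, ?_⟩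
      rw [hab]
      exact hf b
    have hdisj : Disjoint (commonUnionG G S) (f '' T) := by
      rw [Set.disjoint_left]
      rintro w ⟨u, hu, v, hv, huv, huw, hvw⟩ ⟨a, ha, rfl⟩
      simp only [T, Finset.coe_filter, Set.mem_ofPred_eq] at ha
      rcases eq_or_ne u a with rfl | hua
      · exact ha.2 hu.2
      · exact ha.2 ⟨u, hu.1, hua, f a, hf a, huw⟩
    have hsub : commonUnionG G S ∪ f '' T ⊆ (s.biUnion fun v ↦ G.neighborFinset v : Finset V) := by
      rintro w (⟨u, hu, v, hv, huv, huw, hvw⟩ | ⟨a, ha, rfl⟩)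
      · simpa using ⟨u, hu.1, huw⟩
      · simpa using ⟨a, (Finset.mem_filter.mp ha).1, hf a⟩
    have h1 := Set.ncard_le_ncard hsub
    rw [Set.ncard_union_eq hdisj, Set.ncard_coe_finset, hinj.ncard_image,
      Set.ncard_coe_finset] at h1
    have h2 : S = (s.filter shares : Finset V) := by ext; simp [S]
    have h3 : (s.filter shares).card + T.card = s.card :=
      Finset.card_filter_add_card_filter_not (s := s) shares
    rw [h2, Set.ncard_coe_finset, ← h2] at hS1
    omega
  obtain ⟨g, hg, hg'⟩ := (Finset.all_card_le_biUnion_card_iff_exists_injective _).mp hall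
  exact ⟨Equiv.ofBijective g (Finite.injective_iff_bijective.mp hg), fun v ↦ by simpa using hg' v⟩

end SQuad

section Factor

variable {V : Type*} [Fintype V]

/-- If `σ` joins each point to its image under `π`, the cycles of `π` lie in cycles of `σ`. -/
theorem _root_.Equiv.Perm.SameCycle.of_forall_apply {π σ : Perm V}
    (h : ∀ a, σ.SameCycle a (π a)) {a b : V} (hab : π.SameCycle a b) : σ.SameCycle a b := by
  obtain ⟨n, rfl⟩ := hab.exists_nat_pow_eq
  clear hab
  induction n with
  | zero => exact Perm.SameCycle.rfl
  | succ n ih =>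
    rw [pow_succ', Perm.mul_apply]
    exact ih.trans (h _)

/-- Exchanging the images of two points on different cycles joins these cycles. -/
theorem _root_.Equiv.Perm.sameCycle_mul_swap [DecidableEq V] {π : Perm V} {u v : V}
    (huv : ¬ π.SameCycle u v) : (π * swap u v).SameCycle u v := by
  have hex : ∃ n, 0 < n ∧ (π ^ n) v = v :=
    ⟨orderOf π, orderOf_pos π, by rw [pow_orderOf_eq_one, Perm.one_apply]⟩
  classical
  obtain ⟨hpos, hfix⟩ := Nat.find_spec hex
  have hmin : ∀ m, 0 < m → m < Nat.find hex → (π ^ m) v ≠ v := fun m h1 h2 h3 ↦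
    Nat.find_min hex h2 ⟨h1, h3⟩
  have key : ∀ m, 0 < m → m ≤ Nat.find hex → ((π * swap u v) ^ m) u = (π ^ m) v := by
    intro m hm
    induction m, hm using Nat.le_induction with
    | base => intro _; simp
    | succ m hm ih =>
      intro hle
      rw [pow_succ', Perm.mul_apply, ih (by omega), Perm.mul_apply, swap_apply_of_ne_of_ne,
        pow_succ', Perm.mul_apply]
      · intro h
        exact huv (Perm.SameCycle.symm ⟨m, by simpa using h⟩)
      · exact hmin m hm (by omega)
  exact ⟨Nat.find hex, by rw [zpow_natCast, key _ hpos le_rfl, hfix]⟩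

/-- Exchanging the images of two points on different cycles coarsens the cycle partition. -/
theorem _root_.Equiv.Perm.SameCycle.mul_swap [DecidableEq V] {π : Perm V} {u v : V}
    (huv : ¬ π.SameCycle u v) {a b : V} (hab : π.SameCycle a b) :
    (π * swap u v).SameCycle a b := by
  have h := Perm.sameCycle_mul_swap huv
  refine hab.of_forall_apply fun c ↦ ?_
  by_cases hcu : c = u
  · subst hcu
    exact h.trans ⟨1, by simp⟩
  by_cases hcv : c = v
  · subst hcv
    exact h.symm.trans ⟨1, by simp⟩
  exact ⟨1, by simp [swap_apply_of_ne_of_ne hcu hcv]⟩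

/-- A permutation moving each vertex to a neighbor whose cycle partition cannot be coarsened. -/
structure IsMaximalFactor (G : SimpleGraph V) (π : Perm V) : Prop where
  adj : ∀ v, G.Adj v (π v)
  maximal : ∀ σ : Perm V, (∀ v, G.Adj v (σ v)) →
    (∀ a b, π.SameCycle a b → σ.SameCycle a b) → ∀ a b, σ.SameCycle a b → π.SameCycle a b

variable {G : SimpleGraph V}

theorem exists_isMaximalFactor (h : ∃ π : Perm V, ∀ v, G.Adj v (π v)) :
    ∃ π, G.IsMaximalFactor π := by
  classical
  let S : Set (Perm V) := {π | ∀ v, G.Adj v (π v)}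
  let f : Perm V → Set (V × V) := fun π ↦ {p | π.SameCycle p.1 p.2}
  obtain ⟨π, hπ, hmax⟩ := S.toFinite.exists_maximalFor f S h
  refine ⟨π, hπ, fun σ hσ hle a b hab ↦ ?_⟩
  exact hmax hσ (fun p hp ↦ hle p.1 p.2 hp) (show (a, b) ∈ f σ from hab)

namespace IsMaximalFactor

variable {π : Perm V} (h : G.IsMaximalFactor π)
include h

omit [Fintype V] in
theorem adj_symm (v : V) : G.Adj v (π.symm v) := by
  simpa using (h.adj (π.symm v)).symm

theorem false_of_adj_apply {u v : V} (huv : ¬ π.SameCycle u v) (h1 : G.Adj u (π v))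
    (h2 : G.Adj v (π u)) : False := by
  classical
  refine huv (h.maximal (π * swap u v) (fun w ↦ ?_) (fun a b hab ↦ hab.mul_swap huv) u v
    (Perm.sameCycle_mul_swap huv))
  by_cases hwu : w = u
  · simpa [hwu] using h1
  by_cases hwv : w = v
  · simpa [hwv] using h2
  simpa [swap_apply_of_ne_of_ne hwu hwv] using h.adj w

/-- Reversing one cycle of a maximal factor gives a maximal factor with the same cycles. -/
theorem exists_reverse (y : V) : ∃ σ, G.IsMaximalFactor σ ∧
    (∀ a b, σ.SameCycle a b ↔ π.SameCycle a b) ∧ (∀ a, π.SameCycle y a → σ a = π.symm a) ∧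
    ∀ a, ¬ π.SameCycle y a → σ a = π a := by
  classical
  let c := π.cycleOf y
  let σ : Perm V := π * c⁻¹ * c⁻¹
  have hin : ∀ a, π.SameCycle y a → σ a = π.symm a := by
    intro a ha
    have hc : ∀ b, π.SameCycle y b → c⁻¹ b = π.symm b := by
      intro b hb
      rw [Perm.inv_eq_iff_eq]
      have : π.SameCycle y (π.symm b) := Perm.sameCycle_symm_apply_right.mpr hb
      simp [c, this.cycleOf_apply]
    simp only [σ, Perm.mul_apply]
    rw [hc a ha, hc _ (Perm.sameCycle_symm_apply_right.mpr ha)]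
    simp
  have hout : ∀ a, ¬ π.SameCycle y a → σ a = π a := by
    intro a ha
    have : c⁻¹ a = a := by
      rw [Perm.inv_eq_iff_eq]
      exact (Perm.cycleOf_apply_of_not_sameCycle ha).symm
    simp only [σ, Perm.mul_apply, this]
  have hle : ∀ a b, π.SameCycle a b → σ.SameCycle a b := by
    refine fun a b hab ↦ hab.of_forall_apply fun d ↦ ?_
    by_cases hd : π.SameCycle y d
    · refine Perm.SameCycle.symm ⟨1, ?_⟩
      rw [zpow_one, hin _ (Perm.sameCycle_apply_right.mpr hd)]
      simp
    · exact ⟨1, by rw [zpow_one, hout d hd]⟩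
  have hadj : ∀ v, G.Adj v (σ v) := by
    intro v
    by_cases hv : π.SameCycle y v
    · rw [hin v hv]
      exact h.adj_symm v
    · rw [hout v hv]
      exact h.adj v
  have hiff : ∀ a b, σ.SameCycle a b ↔ π.SameCycle a b := fun a b ↦
    ⟨h.maximal σ hadj hle a b, hle a b⟩
  refine ⟨σ, ⟨hadj, fun ρ hρ hσρ a b hab ↦ ?_⟩, hiff, hin, hout⟩
  exact hle a b (h.maximal ρ hρ (fun a b h' ↦ hσρ a b (hle a b h')) a b hab)

section Cross

variable {x y : V} (hxy : ¬ π.SameCycle x y) (hadj : G.Adj x y)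
include hxy hadj

theorem not_adj_apply_symm : ¬ G.Adj (π x) (π.symm y) := fun h' ↦
  h.false_of_adj_apply (u := x) (v := π.symm y) (by rwa [Perm.sameCycle_symm_apply_right])
    (by simpa using hadj) h'.symm

theorem not_adj_apply_apply : ¬ G.Adj (π x) (π y) := by
  obtain ⟨σ, hσ, hiff, hin, hout⟩ := h.exists_reverse y
  have hs : σ.symm y = π y := by
    rw [Equiv.symm_apply_eq, hin _ (Perm.sameCycle_apply_right.mpr Perm.SameCycle.rfl)]
    simp
  have := hσ.not_adj_apply_symm (by rwa [hiff]) hadj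
  rwa [hs, hout x fun h' ↦ hxy h'.symm] at this

theorem not_adj_symm_apply : ¬ G.Adj (π.symm x) (π y) := fun h' ↦
  h.not_adj_apply_symm (fun h ↦ hxy h.symm) hadj.symm h'.symm

theorem not_adj_symm_symm : ¬ G.Adj (π.symm x) (π.symm y) := by
  obtain ⟨σ, hσ, hiff, hin, hout⟩ := h.exists_reverse x
  have hs : σ.symm y = π.symm y := by
    rw [Equiv.symm_apply_eq, hout _ (by rwa [Perm.sameCycle_symm_apply_right])]
    simp
  have := hσ.not_adj_apply_symm (by rwa [hiff]) hadj
  rwa [hs, hin x Perm.SameCycle.rfl] at this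

end Cross

end IsMaximalFactor

end Factor

section TwoCycle

variable {V : Type*} [Fintype V] {G : SimpleGraph V} {π : Perm V}

theorem _root_.Equiv.Perm.SameCycle.eq_or_eq_of_apply_apply {x y : V} (hx : π (π x) = x)
    (hxy : π.SameCycle x y) : y = x ∨ y = π x := by
  obtain ⟨n, rfl⟩ := hxy.exists_nat_pow_eq
  clear hxy
  induction n with
  | zero => exact Or.inl rfl
  | succ n ih =>
    rw [pow_succ', Perm.mul_apply]
    rcases ih with h | h <;> rw [h]
    · exact Or.inr rfl
    · exact Or.inl hx

theorem _root_.Equiv.Perm.SameCycle.apply_apply {x y : V} (hxy : π.SameCycle x y)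
    (hx : π (π x) = x) : π (π y) = y := by
  rcases hxy.eq_or_eq_of_apply_apply hx with rfl | rfl
  · exact hx
  · rw [hx]

omit [Fintype V] in
theorem symm_ne_of_apply_apply_ne {x : V} (hx : π (π x) ≠ x) : π x ≠ π.symm x := fun h ↦
  hx (by rw [h, Equiv.apply_symm_apply])

/-- A neighbor of a vertex on a cycle of length two lies on another cycle unless it is the image of
that vertex. -/
theorem not_sameCycle_of_adj_of_ne {x y : V} (hx : π (π x) = x) (hadj : G.Adj x y)
    (hy : y ≠ π x) : ¬ π.SameCycle x y := fun h' ↦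
  (h'.eq_or_eq_of_apply_apply hx).elim hadj.ne' hy

namespace IsMaximalFactor

variable (h : G.IsMaximalFactor π)
include h

variable [DecidableEq V] (hsq : SQuadG G) (hdeg : ∀ v : V, (G.neighborSet v).ncard ≤ 4)
include hsq

/-- A neighbor `y` of a vertex `x` on another cycle shares with `π x` a neighbor other than `x`. -/
theorem exists_adj_apply {x y : V} (hxy : ¬ π.SameCycle x y) (hadj : G.Adj x y) :
    ∃ q, q ≠ x ∧ G.Adj (π x) q ∧ G.Adj y q := by
  refine hsq.exists_ne_adj_adj ?_ (h.adj x).symm hadj.symm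
  rintro rfl
  exact hxy (Perm.sameCycle_apply_right.mpr Perm.SameCycle.rfl)

include hdeg

/-- The neighborhood of a vertex `y` on a cycle of length at least three which is adjacent to a
vertex `x` on a cycle of length two. -/
theorem exists_neighbors_of_two_cycle {x y : V} (hx : π (π x) = x) (hy : π (π y) ≠ y)
    (hadj : G.Adj x y) :
    ∃ q, q ≠ x ∧ G.Adj (π x) q ∧ G.Adj y q ∧ π.SameCycle y q ∧ ¬ G.Adj (π x) y ∧
      ∀ e, G.Adj y e → e = x ∨ e = π y ∨ e = π.symm y ∨ e = q := by
  have hxy : ¬ π.SameCycle x y := fun h' ↦ hy (h'.apply_apply hx)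
  obtain ⟨q, hqx, hpq, hyq⟩ := h.exists_adj_apply hsq hxy hadj
  have h1 : ¬ G.Adj (π x) (π y) := h.not_adj_apply_apply hxy hadj
  have h2 : ¬ G.Adj (π x) (π.symm y) := h.not_adj_apply_symm hxy hadj
  have hx1 : x ≠ π y := by
    rintro rfl
    exact hxy (by simp)
  have hx2 : x ≠ π.symm y := by
    rintro rfl
    exact hxy (by simp)
  have hq1 : π y ≠ q := by
    rintro rfl
    exact h1 hpq
  have hq2 : π.symm y ≠ q := by
    rintro rfl
    exact h2 hpq
  have hN : ∀ e, G.Adj y e → e = x ∨ e = π y ∨ e = π.symm y ∨ e = q := fun e he ↦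
    eq_of_adj_of_ncard_neighborSet_le_four hdeg hadj.symm (h.adj y) (h.adj_symm y) hyq he
      hx1 hx2 hqx.symm (symm_ne_of_apply_apply_ne hy) hq1 hq2
  have hpy : ¬ G.Adj (π x) y := by
    intro hpy
    rcases hN _ hpy.symm with h' | h' | h' | h'
    · exact (h.adj x).ne' h'
    · exact hxy (by rw [← Perm.sameCycle_apply_left, h']; simp)
    · exact hxy (by rw [← Perm.sameCycle_apply_left, h']; simp)
    · exact hpq.ne h'
  refine ⟨q, hqx, hpq, hyq, ?_, hpy, hN⟩
  by_contra hc
  have hpqc : ¬ π.SameCycle (π x) q := not_sameCycle_of_adj_of_ne (by rw [hx]) hpq (by rwa [hx])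
  have hxq : ¬ G.Adj x (π q) := by
    simpa using h.not_adj_symm_apply hpqc hpq
  obtain ⟨t, htq, hyt, hqt⟩ := hsq.exists_ne_adj_adj (u := y) (v := π q) (w := q)
    (by rintro rfl; exact hc (by simp)) hyq (h.adj q).symm
  rcases hN t hyt with rfl | rfl | rfl | rfl
  · exact hxq hqt.symm
  · exact h.not_adj_apply_apply hc hyq hqt.symm
  · exact h.not_adj_symm_apply hc hyq hqt.symm
  · exact htq rfl

/-- All neighbors of a vertex on a cycle of length two lie on cycles of length two. -/
theorem apply_apply_of_adj {x y : V} (hx : π (π x) = x) (hadj : G.Adj x y) : π (π y) = y := by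
  by_contra hy
  have hcross : ∀ z, π (π z) ≠ z → ¬ π.SameCycle x z := fun z hz h' ↦
    hz (h'.apply_apply hx)
  -- The second successor of a neighbor of `x` on a long cycle is again a neighbor of `x`.
  have hstep : ∀ y, π (π y) ≠ y → G.Adj x y → G.Adj x (π (π y)) := by
    intro y hy hadj
    have hxy := hcross y hy
    obtain ⟨q, hqx, hpq, hyq, hsame, hpy, hN⟩ := h.exists_neighbors_of_two_cycle hsq hdeg hx hy hadj
    have hp1 : ¬ G.Adj (π x) (π y) := h.not_adj_apply_apply hxy hadj
    obtain ⟨y', hy'y, hxy', hyy'⟩ := hsq.exists_ne_adj_adj (u := x) (v := π y) (w := y)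
      (by rintro rfl; exact hxy (by simp)) hadj (h.adj y).symm
    have hy'p : y' ≠ π x := by
      rintro rfl
      exact hp1 hyy'.symm
    have hxy'c := not_sameCycle_of_adj_of_ne hx hxy' hy'p
    by_cases hy' : π (π y') = y'
    · exfalso
      -- No vertex outside the neighborhood of `π x` on a cycle of length two is adjacent to a
      -- neighbor of `x` on a long cycle.
      have hlong : ∀ w z, π (π w) ≠ w → G.Adj x w → ¬ G.Adj (π x) z → π (π z) = z → z ≠ x →
          ¬ G.Adj w z := by
        intro w z hw hxw hpz hz hzx hwz
        obtain ⟨q, hqx, hpq, hyq, hsame, hpy, hN⟩ :=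
          h.exists_neighbors_of_two_cycle hsq hdeg hx hw hxw
        rcases hN z hwz with rfl | rfl | rfl | rfl
        · exact hzx rfl
        · exact hw (π.injective hz)
        · rw [Equiv.apply_symm_apply] at hz
          exact hw (by rw [hz, Equiv.apply_symm_apply])
        · exact hpz hpq
      have hstep2 : ∀ w, π (π w) = w → G.Adj x w → w ≠ π x →
          ∃ w', w' ≠ w ∧ G.Adj x w' ∧ w' ≠ π x ∧ G.Adj w' (π w) ∧ π (π w') = w' := by
        intro w hw hxw hwp
        have hxwc := not_sameCycle_of_adj_of_ne hx hxw hwp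
        have hpw : ¬ G.Adj (π x) (π w) := h.not_adj_apply_apply hxwc hxw
        obtain ⟨w', hw'w, hxw', hww'⟩ := hsq.exists_ne_adj_adj (u := x) (v := π w) (w := w)
          (by rintro rfl; exact hxwc (by simp)) hxw (h.adj w).symm
        refine ⟨w', hw'w, hxw', ?_, hww'.symm, ?_⟩
        · rintro rfl
          exact hpw hww'.symm
        · by_contra hw'
          refine hlong w' (π w) hw' hxw' hpw (by rw [hw]) ?_ hww'.symm
          rintro rfl
          exact hxwc (by simp)
      obtain ⟨y'', h1, h2, h3, h4, h5⟩ := hstep2 y' hy' hxy' hy'p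
      obtain ⟨w, k1, k2, k3, k4, k5⟩ := hstep2 y'' h5 h2 h3
      have hyy'' : y ≠ y'' := by
        rintro rfl
        exact hy h5
      have hyw : y ≠ w := by
        rintro rfl
        exact hy k5
      have hw : w = y' := by
        rcases eq_of_adj_of_ncard_neighborSet_le_four hdeg (h.adj x) hadj hxy' h2 k2
          (by rintro rfl; exact hxy (by simp)) hy'p.symm h3.symm hy'y.symm hyy'' h1.symm
          with h' | h' | h' | h'
        · exact (k3 h').elim
        · exact (hyw h'.symm).elim
        · exact h'
        · exact (k1 h').elim
      subst hw
      refine h.false_of_adj_apply (u := y'') (v := w) (fun h' ↦ ?_) h4 k4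
      rcases h'.eq_or_eq_of_apply_apply h5 with h'' | h''
      · exact k1 h''
      · rw [h''] at k4
        exact k4.ne rfl
    · obtain ⟨q', -, hpq', -, -, -, hN'⟩ := h.exists_neighbors_of_two_cycle hsq hdeg hx hy' hxy'
      rcases hN' (π y) hyy'.symm with h' | h' | h' | h'
      · exact (hxy (by rw [← Perm.sameCycle_apply_right, h'])).elim
      · exact (hy'y (π.injective h').symm).elim
      · rw [h', Equiv.apply_symm_apply]
        exact hxy'
      · exact (hp1 (h' ▸ hpq')).elim
  obtain ⟨q, hqx, hpq, hyq, hsame, hpy, hN⟩ := h.exists_neighbors_of_two_cycle hsq hdeg hx hy hadj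
  have hiter : ∀ k : ℕ, π (π ((π ^ (2 * k)) y)) ≠ (π ^ (2 * k)) y ∧ G.Adj x ((π ^ (2 * k)) y) := by
    intro k
    induction k with
    | zero => exact ⟨hy, hadj⟩
    | succ k ih =>
      have heq : (π ^ (2 * (k + 1))) y = π (π ((π ^ (2 * k)) y)) := by
        rw [Nat.mul_succ, pow_succ', pow_succ', Perm.mul_apply, Perm.mul_apply]
      rw [heq]
      exact ⟨fun h' ↦ ih.1 (π.injective (π.injective h')), hstep _ ih.1 ih.2⟩
  obtain ⟨n, rfl⟩ := hsame.exists_nat_pow_eq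
  obtain ⟨k, rfl | rfl⟩ := n.even_or_odd'
  · obtain ⟨-, -, -, -, -, hpz, -⟩ :=
      h.exists_neighbors_of_two_cycle hsq hdeg hx (hiter k).1 (hiter k).2
    exact hpz hpq
  · rw [pow_succ', Perm.mul_apply] at hpq
    exact h.not_adj_apply_apply (hcross _ (hiter k).1) (hiter k).2 hpq

end IsMaximalFactor

end TwoCycle

section Structure

variable {V : Type*} [Fintype V] [DecidableEq V] {G : SimpleGraph V} {π : Perm V}

namespace IsMaximalFactor

variable (h : G.IsMaximalFactor π)
include h

/-- Three cycles of length two of a maximal factor cannot be joined cyclically. -/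
theorem false_of_adj_apply_of_involutive (h2 : ∀ v, π (π v) = v) {a b c : V}
    (hab : G.Adj a (π b)) (hbc : G.Adj b (π c)) (hca : G.Adj c (π a)) (hne : a ≠ b)
    (hne' : b ≠ c) (hne'' : c ≠ a) : False := by
  have hab' : a ≠ π b := hab.ne
  have hbc' : b ≠ π c := hbc.ne
  have hca' : c ≠ π a := hca.ne
  have hba' : b ≠ π a := fun h' ↦ hab' (by rw [h', h2])
  have hcb' : c ≠ π b := fun h' ↦ hbc' (by rw [h', h2])
  have hac' : a ≠ π c := fun h' ↦ hca' (by rw [h', h2])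
  let σ : Perm V := π * swap a b * swap b c
  have hσa : σ a = π b := by simp [σ, swap_apply_of_ne_of_ne hne hne''.symm]
  have hσb : σ b = π c := by simp [σ, swap_apply_of_ne_of_ne hne'' hne'.symm]
  have hσc : σ c = π a := by simp [σ]
  have hσ : ∀ v, v ≠ a → v ≠ b → v ≠ c → σ v = π v := fun v ha hb hc ↦ by
    simp [σ, swap_apply_of_ne_of_ne ha hb, swap_apply_of_ne_of_ne hb hc]
  have hlink : ∀ u v, σ u = π v → v ≠ π a → v ≠ π b → v ≠ π c → σ.SameCycle u v := by
    intro u v hu ha hb hc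
    have hv : σ (π v) = v := by
      rw [hσ _ (fun h' ↦ ha (by rw [← h', h2])) (fun h' ↦ hb (by rw [← h', h2]))
        (fun h' ↦ hc (by rw [← h', h2])), h2]
    rw [← Perm.sameCycle_apply_left, hu, ← Perm.sameCycle_apply_left, hv]
  have sab := hlink a b hσa hba' (h.adj b).ne hbc'
  have sbc := hlink b c hσb hca' hcb' (h.adj c).ne
  have sca := hlink c a hσc (h.adj a).ne hab' hac'
  have hle : ∀ v, σ.SameCycle v (π v) ∧ G.Adj v (σ v) := by
    intro v
    by_cases ha : v = a
    · subst ha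
      exact ⟨sca.symm.trans (by rw [← hσc]; simp), hσa ▸ hab⟩
    by_cases hb : v = b
    · subst hb
      exact ⟨sab.symm.trans (by rw [← hσa]; simp), hσb ▸ hbc⟩
    by_cases hc : v = c
    · subst hc
      exact ⟨sbc.symm.trans (by rw [← hσb]; simp), hσc ▸ hca⟩
    rw [← hσ v ha hb hc]
    exact ⟨by simp, hσ v ha hb hc ▸ h.adj v⟩
  have hsame := h.maximal σ (fun v ↦ (hle v).2)
    (fun _ _ h' ↦ h'.of_forall_apply fun v ↦ (hle v).1) a b sab
  exact (hsame.eq_or_eq_of_apply_apply (h2 a)).elim hne.symm hba'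

variable (hsq : SQuadG G) (hdeg : ∀ v : V, (G.neighborSet v).ncard ≤ 4)
include hsq hdeg

/-- A maximal factor with more than one cycle does not consist of cycles of length two. -/
theorem false_of_involutive (h2 : ∀ v, π (π v) = v) {x y : V} (hxy : ¬ π.SameCycle x y)
    (hadj : G.Adj x y) : False := by
  have hstep : ∀ w, G.Adj x w → w ≠ π x → ∃ w', w' ≠ w ∧ G.Adj x w' ∧ w' ≠ π x ∧
      G.Adj w' (π w) := by
    intro w hxw hwp
    have hxwc := not_sameCycle_of_adj_of_ne (h2 x) hxw hwp
    obtain ⟨w', hw'w, hxw', hww'⟩ := hsq.exists_ne_adj_adj (u := x) (v := π w) (w := w)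
      (by rintro rfl; exact hxwc (by simp)) hxw (h.adj w).symm
    refine ⟨w', hw'w, hxw', ?_, hww'.symm⟩
    rintro rfl
    exact h.not_adj_apply_apply hxwc hxw hww'.symm
  have hmutual : ∀ u v, u ≠ v → G.Adj u (π v) → ¬ G.Adj v (π u) := by
    intro u v huv huv' hvu'
    refine h.false_of_adj_apply (fun h' ↦ ?_) huv' hvu'
    rcases h'.eq_or_eq_of_apply_apply (h2 u) with rfl | rfl
    · exact huv rfl
    · exact hvu'.ne rfl
  have hyp : y ≠ π x := by
    rintro rfl
    exact hxy (by simp)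
  obtain ⟨b, hb1, hb2, hb3, hb4⟩ := hstep y hadj hyp
  obtain ⟨c, hc1, hc2, hc3, hc4⟩ := hstep b hb2 hb3
  obtain ⟨d, hd1, hd2, hd3, hd4⟩ := hstep c hc2 hc3
  have hcy : c ≠ y := by
    rintro rfl
    exact hmutual b c hc1.symm hb4 hc4
  rcases eq_of_adj_of_ncard_neighborSet_le_four hdeg (h.adj x) hadj hb2 hc2 hd2 hyp.symm hb3.symm
    hc3.symm hb1.symm hcy.symm hc1.symm with rfl | rfl | rfl | rfl
  · exact hd3 rfl
  · exact h.false_of_adj_apply_of_involutive h2 hd4 hc4 hb4 hcy.symm hc1 hb1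
  · exact hmutual c d hc1 hc4 hd4
  · exact hd1 rfl

/-- The local structure of a maximal factor whose cycles have length at least three. -/
theorem exists_neighbors_of_long (h3 : ∀ v, π (π v) ≠ v) {x y : V} (hxy : ¬ π.SameCycle x y)
    (hadj : G.Adj x y) : ∃ z, z ≠ y ∧ G.Adj x z ∧ ¬ π.SameCycle x z ∧ G.Adj (π y) z ∧
      G.Adj (π.symm y) z ∧ ∀ e, G.Adj x e → e = π x ∨ e = π.symm x ∨ e = y ∨ e = z := by
  have hy1 : ∀ u v, ¬ π.SameCycle u v → u ≠ π v := by
    rintro u v huv rfl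
    exact huv (by simp)
  have hy2 : ∀ u v, ¬ π.SameCycle u v → u ≠ π.symm v := by
    rintro u v huv rfl
    exact huv (by simp)
  have hyx : ¬ π.SameCycle y x := fun h' ↦ hxy h'.symm
  obtain ⟨z, hzy, hxz, hyz⟩ := hsq.exists_ne_adj_adj (hy1 x y hxy) hadj (h.adj y).symm
  obtain ⟨z', hzy', hxz', hyz'⟩ := hsq.exists_ne_adj_adj (hy2 x y hxy) hadj (h.adj_symm y).symm
  have hz1 : π x ≠ z := by
    rintro rfl
    exact h.not_adj_apply_apply hxy hadj hyz.symm
  have hz2 : π.symm x ≠ z := by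
    rintro rfl
    exact h.not_adj_symm_apply hxy hadj hyz.symm
  have hN : ∀ e, G.Adj x e → e = π x ∨ e = π.symm x ∨ e = y ∨ e = z := fun e he ↦
    eq_of_adj_of_ncard_neighborSet_le_four hdeg (h.adj x) (h.adj_symm x) hadj hxz he
      (symm_ne_of_apply_apply_ne (h3 x)) (hy1 y x hyx).symm hz1 (hy2 y x hyx).symm hz2 hzy.symm
  have hzz' : z' = z := by
    rcases hN z' hxz' with rfl | rfl | rfl | h'
    · exact (h.not_adj_apply_symm hxy hadj hyz'.symm).elim
    · exact (h.not_adj_symm_symm hxy hadj hyz'.symm).elim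
    · exact (hzy' rfl).elim
    · exact h'
  subst hzz'
  refine ⟨z', hzy, hxz, fun hc ↦ ?_, hyz, hyz', hN⟩
  have hzy'' : ¬ π.SameCycle z' y := fun h' ↦ hxy (hc.trans h')
  have hzx1 : π z' ≠ x := by
    rintro rfl
    simp at hz2
  have hzx2 : π.symm z' ≠ x := by
    rintro rfl
    simp at hz1
  have hzy1 : π z' ≠ π y := fun h' ↦ hzy'' (by rw [← Perm.sameCycle_apply_left, h']; simp)
  have hzy2 : π.symm z' ≠ π y := fun h' ↦ hzy'' (by rw [← Perm.sameCycle_symm_apply_left, h']; simp)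
  rcases eq_of_adj_of_ncard_neighborSet_le_four hdeg (h.adj z') (h.adj_symm z') hxz.symm hyz.symm
    hyz'.symm (symm_ne_of_apply_apply_ne (h3 z')) hzx1 hzy1 hzx2 hzy2 (hy1 x y hxy)
    with e | e | e | e
  · exact hzy'' (by rw [← Perm.sameCycle_apply_left, ← e]; simp)
  · exact hzy'' (by rw [← Perm.sameCycle_symm_apply_left, ← e]; simp)
  · exact hy2 x y hxy e.symm
  · exact symm_ne_of_apply_apply_ne (h3 y) e.symm

/-- If all cycles of a maximal factor have length at least three and `x` has a neighbor `y` on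
another cycle, this cycle has length four and `x` is adjacent to the vertex opposite to `y`. -/
theorem adj_apply_apply_of_long (h3 : ∀ v, π (π v) ≠ v) {x y : V} (hxy : ¬ π.SameCycle x y)
    (hadj : G.Adj x y) : π (π (π (π y))) = y ∧ G.Adj x (π (π y)) ∧
      ∀ e, G.Adj x e → e = π x ∨ e = π.symm x ∨ e = y ∨ e = π (π y) := by
  obtain ⟨z, hzy, hxz, hxzc, hz1, hz2, hN⟩ := h.exists_neighbors_of_long hsq hdeg h3 hxy hadj
  obtain ⟨y', hy'z, hxy', hxyc', hy1, hy2, -⟩ := h.exists_neighbors_of_long hsq hdeg h3 hxzc hxz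
  have hyx : ¬ π.SameCycle y x := fun h' ↦ hxy h'.symm
  obtain ⟨w, -, -, hywc, -, -, hNy⟩ := h.exists_neighbors_of_long hsq hdeg h3 hyx hadj.symm
  have hy' : y' = y := by
    rcases hN y' hxy' with rfl | rfl | h' | h'
    · exact (hxyc' (by simp)).elim
    · exact (hxyc' (by simp)).elim
    · exact h'
    · exact (hy'z h').elim
  subst hy'
  have hzx1 : π z ≠ x := by
    rintro rfl
    exact hxzc (by simp)
  have hzx2 : π.symm z ≠ x := by
    rintro rfl
    exact hxzc (by simp)
  have hz : π z = π.symm y' ∧ π.symm z = π y' := by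
    have hne := symm_ne_of_apply_apply_ne (h3 z)
    rcases hNy _ hy1.symm with e1 | e1 | e1 | e1
    · exact (hzy (π.injective e1)).elim
    · rcases hNy _ hy2.symm with e2 | e2 | e2 | e2
      · exact ⟨e1, e2⟩
      · exact (hzy (π.symm.injective e2)).elim
      · exact (hzx2 e2).elim
      · refine (hywc ?_).elim
        rw [← e2, Perm.sameCycle_symm_apply_right, ← Perm.sameCycle_apply_right, e1]
        simp
    · exact (hzx1 e1).elim
    · have hyz : ¬ π.SameCycle y' z := by
        rw [← Perm.sameCycle_apply_right, e1]
        exact hywc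
      rcases hNy _ hy2.symm with e2 | e2 | e2 | e2
      · exact (hyz (by rw [← Perm.sameCycle_symm_apply_right, e2]; simp)).elim
      · exact (hzy (π.symm.injective e2)).elim
      · exact (hzx2 e2).elim
      · exact (hne (e1.trans e2.symm)).elim
  have hz' : z = π (π y') := by rw [← hz.2, Equiv.apply_symm_apply]
  refine ⟨?_, hz' ▸ hxz, hz' ▸ hN⟩
  rw [← hz', hz.1, Equiv.apply_symm_apply]

/-- Under the hypotheses of `adj_apply_apply_of_long`, the successor of `y` has a neighbor on
another cycle. -/
theorem exists_adj_not_sameCycle_apply (h3 : ∀ v, π (π v) ≠ v) {x y : V}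
    (hxy : ¬ π.SameCycle x y) (hadj : G.Adj x y) :
    ∃ t, ¬ π.SameCycle (π y) t ∧ G.Adj (π y) t := by
  obtain ⟨hy4, -, hN⟩ := h.adj_apply_apply_of_long hsq hdeg h3 hxy hadj
  have hs : π.symm y = π (π (π y)) := by rw [Equiv.symm_apply_eq, hy4]
  obtain ⟨t, ht1, ht2, ht3, ht4⟩ := hsq.exists_adj_adj_of_triple (x := x) (a := π y)
    (b := π.symm y) (w := y) (y := y) (z := π (π y)) (by rintro rfl; exact hxy (by simp))
    (by rintro rfl; exact hxy (by simp)) (symm_ne_of_apply_apply_ne (h3 y)) hadj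
    (h.adj y).symm (h.adj_symm y).symm
    (by
      intro t hxt hyt
      rcases hN t hxt with rfl | rfl | h' | h'
      · exact (h.not_adj_apply_apply hxy hadj hyt.symm).elim
      · exact (h.not_adj_symm_apply hxy hadj hyt.symm).elim
      · exact Or.inl h'
      · exact Or.inr h')
    (by
      intro t hxt hyt
      rcases hN t hxt with rfl | rfl | h' | h'
      · exact (h.not_adj_apply_symm hxy hadj hyt.symm).elim
      · exact (h.not_adj_symm_symm hxy hadj hyt.symm).elim
      · exact Or.inl h'
      · exact Or.inr h')
  refine ⟨t, fun hc ↦ ?_, ht3⟩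
  rw [Perm.sameCycle_apply_left] at hc
  obtain ⟨n, rfl⟩ := hc.exists_nat_pow_eq
  have hmem : ∀ n : ℕ, (π ^ n) y = y ∨ (π ^ n) y = π y ∨ (π ^ n) y = π (π y) ∨
      (π ^ n) y = π (π (π y)) := by
    intro n
    induction n with
    | zero => exact Or.inl rfl
    | succ n ih =>
      rw [pow_succ', Perm.mul_apply]
      rcases ih with e | e | e | e <;> rw [e] <;> simp [hy4]
  rcases hmem n with e | e | e | e
  · exact ht1 e
  · exact ht3.ne e.symm
  · exact ht2 e
  · exact ht4.ne (hs.trans e.symm)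

/-- If all cycles of a maximal factor have length at least three and there is more than one cycle,
each vertex and its second successor are twins of degree four. -/
theorem twins_of_long (hconn : G.Connected) (h3 : ∀ v, π (π v) ≠ v) {x y : V}
    (hxy : ¬ π.SameCycle x y) (hadj : G.Adj x y) (v : V) :
    π (π (π (π v))) = v ∧ (∀ e, G.Adj v e → G.Adj (π (π v)) e) ∧
      ∃ w, ¬ π.SameCycle v w ∧ G.Adj v w := by
  have hall : ∀ v, ∃ w, ¬ π.SameCycle v w ∧ G.Adj v w := by
    refine hconn.forall_of_adj_closed ⟨y, hxy, hadj⟩ ?_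
    rintro u v ⟨w, huw, hadjw⟩ huv
    by_cases hc : π.SameCycle u v
    · have hwu : ¬ π.SameCycle w u := fun h' ↦ huw h'.symm
      have hu4 := (h.adj_apply_apply_of_long hsq hdeg h3 hwu hadjw.symm).1
      obtain ⟨t, ht, ht'⟩ := h.exists_adj_not_sameCycle_apply hsq hdeg h3 hwu hadjw.symm
      rcases (h.adj_apply_apply_of_long hsq hdeg h3 huw hadjw).2.2 v huv with rfl | rfl | rfl | rfl
      · exact ⟨t, ht, ht'⟩
      · have hs : π.symm u = π (π (π u)) := by rw [Equiv.symm_apply_eq, hu4]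
        refine ⟨t, ?_, ?_⟩
        · simpa using ht
        · rw [hs]
          exact (h.adj_apply_apply_of_long hsq hdeg h3 (fun h' ↦ ht h'.symm) ht'.symm).2.1.symm
      · exact (huw hc).elim
      · exact (huw (by simpa using hc)).elim
    · exact ⟨u, fun h' ↦ hc h'.symm, huv.symm⟩
  obtain ⟨w, hvw, hvw'⟩ := hall v
  have hwv : ¬ π.SameCycle w v := fun h' ↦ hvw h'.symm
  obtain ⟨hv4, hwv2, -⟩ := h.adj_apply_apply_of_long hsq hdeg h3 hwv hvw'.symm
  have hs : π.symm v = π (π (π v)) := by rw [Equiv.symm_apply_eq, hv4]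
  obtain ⟨-, hvw2, hN⟩ := h.adj_apply_apply_of_long hsq hdeg h3 hvw hvw'
  refine ⟨hv4, fun e he ↦ ?_, w, hvw, hvw'⟩
  rcases hN e he with rfl | rfl | rfl | rfl
  · exact (h.adj _).symm
  · rw [hs]
    exact h.adj _
  · exact hwv2.symm
  · exact (h.adj_apply_apply_of_long hsq hdeg h3 (x := π (π v)) (y := w) (by simpa using hvw)
      hwv2.symm).2.1

end IsMaximalFactor

end Structure

section Twins

variable {V : Type*} {G : SimpleGraph V} {τ : V → V}

/-- The first `n` terms of `a` form a path meeting each pair of twins at most once. -/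
structure IsTwinFreePath (G : SimpleGraph V) (τ : V → V) (a : ℕ → V) (n : ℕ) : Prop where
  adj : ∀ i, i + 1 < n → G.Adj (a i) (a (i + 1))
  inj : ∀ i < n, ∀ j < n, a i = a j → i = j
  ne_twin : ∀ i < n, ∀ j < n, a i ≠ τ (a j)

namespace IsTwinFreePath

variable {a : ℕ → V} {n : ℕ}

theorem reverse (h : G.IsTwinFreePath τ a n) : G.IsTwinFreePath τ (fun i ↦ a (n - 1 - i)) n where
  adj i hi := by
    have := (h.adj (n - 1 - (i + 1)) (by omega)).symm
    rwa [show n - 1 - (i + 1) + 1 = n - 1 - i by omega] at this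
  inj i hi j hj hij := by
    have := h.inj _ (by omega) _ (by omega) hij
    omega
  ne_twin i hi j hj := h.ne_twin _ (by omega) _ (by omega)

theorem extend (h : G.IsTwinFreePath τ a n) (hττ : ∀ v, τ (τ v) = v) (hτ : ∀ v, τ v ≠ v) {w : V}
    (hw : G.Adj (a (n - 1)) w) (hne : ∀ j < n, w ≠ a j ∧ w ≠ τ (a j)) :
    G.IsTwinFreePath τ (fun i ↦ if i < n then a i else w) (n + 1) where
  adj i hi := by
    rw [if_pos (by omega)]
    split_ifs with hi'
    · exact h.adj i hi'
    · rwa [show i = n - 1 by omega]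
  inj i hi j hj := by
    split_ifs with h1 h2 h2
    · exact h.inj i h1 j h2
    · exact fun e ↦ ((hne i h1).1 e.symm).elim
    · exact fun e ↦ ((hne j h2).1 e).elim
    · omega
  ne_twin i hi j hj := by
    split_ifs with h1 h2 h2
    · exact h.ne_twin i h1 j h2
    · exact fun e ↦ (hne i h1).2 (by rw [e, hττ])
    · exact (hne j h2).2
    · exact (hτ w).symm

theorem le_card [Fintype V] (h : G.IsTwinFreePath τ a n) : n ≤ Fintype.card V := by
  simpa using Fintype.card_le_of_injective (fun i : Fin n ↦ a i)
    fun i j hij ↦ Fin.ext (h.inj i i.2 j j.2 hij)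

end IsTwinFreePath

/-- A connected graph of maximum degree four whose vertices are paired into twins, with each vertex
adjacent to two different pairs, is Hamiltonian. -/
theorem isHamiltonian_of_twins [Fintype V] [DecidableEq V] (hconn : G.Connected)
    (hcard : 3 ≤ Fintype.card V) (hdeg : ∀ v : V, (G.neighborSet v).ncard ≤ 4)
    (hττ : ∀ v, τ (τ v) = v) (hτ : ∀ v, τ v ≠ v) (htwin : ∀ v e, G.Adj v e → G.Adj (τ v) e)
    (htwo : ∀ v, ∃ w w', G.Adj v w ∧ G.Adj v w' ∧ w' ≠ w ∧ w' ≠ τ w) : G.IsHamiltonian := by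
  classical
  have htwin' : ∀ v e, G.Adj v e → G.Adj v (τ e) := fun v e he ↦ (htwin e v he.symm).symm
  have hN : ∀ v w w', G.Adj v w → G.Adj v w' → w' ≠ w → w' ≠ τ w →
      ∀ e, G.Adj v e → e = w ∨ e = τ w ∨ e = w' ∨ e = τ w' := fun v w w' h1 h2 h3 h4 e he ↦
    eq_of_adj_of_ncard_neighborSet_le_four hdeg h1 (htwin' _ _ h1) h2 (htwin' _ _ h2) he
      (hτ w).symm h3.symm (fun h' ↦ h4 (by rw [h', hττ])) h4.symm
      (fun h' ↦ h3 (by rw [← hττ w', ← h', hττ])) (hτ w').symm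
  obtain ⟨v₀⟩ := hconn.nonempty
  let P : ℕ → Prop := fun n ↦ 0 < n ∧ ∃ a, G.IsTwinFreePath τ a n
  have hP1 : P 1 := ⟨one_pos, fun _ ↦ v₀, fun i hi ↦ by omega, fun i hi j hj _ ↦ by omega,
    fun i hi j hj ↦ (hτ v₀).symm⟩
  obtain ⟨n, ⟨hn, a, ha⟩, hmax⟩ : ∃ n, P n ∧ ∀ m, P m → m ≤ n := by
    refine ⟨Nat.findGreatest P (Fintype.card V), Nat.findGreatest_spec (by omega) hP1,
      fun m hm ↦ Nat.le_findGreatest ?_ hm⟩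
    obtain ⟨-, a, ha⟩ := hm
    exact ha.le_card
  have hend : ∀ a, G.IsTwinFreePath τ a n → ∀ e, G.Adj (a (n - 1)) e →
      ∃ j < n, e = a j ∨ e = τ (a j) := by
    intro a ha e he
    by_contra! hne
    have := hmax (n + 1) ⟨by omega, _, ha.extend hττ hτ he hne⟩
    omega
  have hmid : ∀ i, i + 2 < n → ∀ e, G.Adj (a (i + 1)) e →
      e = a i ∨ e = τ (a i) ∨ e = a (i + 2) ∨ e = τ (a (i + 2)) := fun i hi ↦
    hN _ _ _ (ha.adj i (by omega)).symm (ha.adj (i + 1) hi)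
      (fun h' ↦ by have := ha.inj _ hi _ (by omega) h'; omega)
      (ha.ne_twin _ hi _ (by omega))
  have hclosed : ∀ i < n, ∀ e, G.Adj (a i) e → ∃ j < n, e = a j ∨ e = τ (a j) := by
    intro i hi e he
    rcases Nat.eq_zero_or_pos i with rfl | hpos
    · obtain ⟨j, hj, hej⟩ := hend _ ha.reverse e (by simpa using he)
      exact ⟨n - 1 - j, by omega, hej⟩
    · obtain ⟨k, rfl⟩ := Nat.exists_eq_succ_of_ne_zero hpos.ne'
      by_cases hk : k + 2 < n
      · rcases hmid k hk e he with h' | h' | h' | h'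
        · exact ⟨k, by omega, Or.inl h'⟩
        · exact ⟨k, by omega, Or.inr h'⟩
        · exact ⟨k + 2, by omega, Or.inl h'⟩
        · exact ⟨k + 2, by omega, Or.inr h'⟩
      · exact hend a ha e (by rwa [show n - 1 = k.succ by omega])
  have hcover : ∀ v, ∃ j < n, v = a j ∨ v = τ (a j) := by
    refine hconn.forall_of_adj_closed (x := a 0) ⟨0, hn, Or.inl rfl⟩ ?_
    rintro u v ⟨j, hj, rfl | rfl⟩ huv
    · exact hclosed j hj v huv
    · exact hclosed j hj v (by simpa [hττ] using htwin _ _ huv)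
  have hself : ∀ v, ¬ G.Adj v (τ v) := fun v hv ↦ (htwin v _ hv).ne rfl
  have hn2 : 2 ≤ n := by
    by_contra hlt
    obtain ⟨w, -, hw, -⟩ := htwo (a 0)
    obtain ⟨j, hj, rfl | rfl⟩ := hclosed 0 hn w hw
    · exact hw.ne (by rw [show j = 0 by omega])
    · rw [show j = 0 by omega] at hw
      exact hself _ hw
  have hlast : G.Adj (a (n - 1)) (a 0) := by
    obtain ⟨c, hc, hc1, hc2⟩ : ∃ c, G.Adj (a 0) c ∧ c ≠ a 1 ∧ c ≠ τ (a 1) := by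
      obtain ⟨w, w', h1, h2, h3, h4⟩ := htwo (a 0)
      by_cases hw : w = a 1 ∨ w = τ (a 1)
      · refine ⟨w', h2, ?_⟩
        rcases hw with rfl | rfl
        · exact ⟨h3, h4⟩
        · rw [hττ] at h4
          exact ⟨h4, h3⟩
      · rw [not_or] at hw
        exact ⟨w, h1, hw⟩
    obtain ⟨j, hj, hcj, hj1⟩ : ∃ j < n, G.Adj (a 0) (a j) ∧ j ≠ 1 := by
      obtain ⟨j, hj, rfl | rfl⟩ := hclosed 0 hn c hc
      · exact ⟨j, hj, hc, fun h' ↦ hc1 (by rw [h'])⟩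
      · exact ⟨j, hj, by simpa [hττ] using htwin' _ _ hc, fun h' ↦ hc2 (by rw [h'])⟩
    rcases Nat.eq_zero_or_pos j with rfl | hpos
    · exact (hcj.ne rfl).elim
    · obtain ⟨k, rfl⟩ := Nat.exists_eq_succ_of_ne_zero hpos.ne'
      by_cases hk : k + 2 < n
      · rcases hmid k hk _ hcj.symm with h' | h' | h' | h'
        · have := ha.inj _ hn _ (by omega) h'
          omega
        · exact (ha.ne_twin _ hn _ (by omega) h').elim
        · have := ha.inj _ hn _ (by omega) h'
          omega
        · exact (ha.ne_twin _ hn _ (by omega) h').elim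
      · rw [show n - 1 = k.succ by omega]
        exact hcj.symm
  let b : ℕ → V := fun i ↦ if i < n then a i else τ (a (i - n))
  have hτinj : ∀ u v, τ u = τ v → u = v := fun u v huv ↦ by rw [← hττ u, huv, hττ]
  have hbinj : ∀ i < 2 * n, ∀ j < 2 * n, b i = b j → i = j := by
    intro i hi j hj
    simp only [b]
    split_ifs with h1 h2 h2
    · exact ha.inj i h1 j h2
    · exact fun e ↦ (ha.ne_twin i h1 _ (by omega) e).elim
    · exact fun e ↦ (ha.ne_twin j h2 _ (by omega) e.symm).elim
    · intro e
      have := ha.inj _ (by omega) _ (by omega) (hτinj _ _ e)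
      omega
  have hbsurj : Function.Surjective fun i : Fin (2 * n) ↦ b i := by
    intro v
    obtain ⟨j, hj, rfl | rfl⟩ := hcover v
    · exact ⟨⟨j, by omega⟩, by simp [b, hj]⟩
    · exact ⟨⟨j + n, by omega⟩, by simp [b]⟩
  have hcardV : Fintype.card V = 2 * n := by
    have := Fintype.card_of_bijective (f := fun i : Fin (2 * n) ↦ b i)
      ⟨fun i j hij ↦ Fin.ext (hbinj i i.2 j j.2 hij), hbsurj⟩
    simpa using this.symm
  refine isHamiltonian_of_cyclic_enumeration hcard b (by rwa [hcardV]) ?_ ?_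
  · intro i hi
    simp only [b]
    split_ifs with h1 h2 h2
    · exact ha.adj i h2
    · rw [show i = n - 1 by omega, show n - 1 + 1 - n = 0 by omega]
      exact htwin' _ _ hlast
    · omega
    · rw [show i + 1 - n = i - n + 1 by omega]
      exact htwin _ _ (htwin' _ _ (ha.adj _ (by omega)))
  · simp only [b]
    rw [if_neg (by omega), if_pos hn, hcardV, show 2 * n - 1 - n = n - 1 by omega]
    exact htwin _ _ hlast

end Twins

end SimpleGraph

/-- A connected s-quadrangular graph (with at least three vertices) in which
every vertex has degree at most 4 is hamiltonian. -/
theorem connected_squad_maxdeg_four_hamiltonian {V : Type*} [Fintype V] [DecidableEq V]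
    (G : SimpleGraph V) (hconn : G.Connected) (hcard : 3 ≤ Fintype.card V)
    (hsq : SQuadG G) (hdeg : ∀ v : V, (G.neighborSet v).ncard ≤ 4) :
    G.IsHamiltonian := by
  have : Nontrivial V := Fintype.one_lt_card_iff_nontrivial.mp (by omega)
  obtain ⟨π, h⟩ := SimpleGraph.exists_isMaximalFactor
    (hsq.exists_perm_adj fun v ↦ hconn.preconnected.exists_adj_of_nontrivial v)
  by_cases hone : ∀ a b, π.SameCycle a b
  · exact SimpleGraph.isHamiltonian_of_sameCycle hcard π h.adj hone
  obtain ⟨x, y, hxy, hadj⟩ : ∃ x y, ¬ π.SameCycle x y ∧ G.Adj x y := by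
    by_contra! hno
    exact hone fun a b ↦ hconn.forall_of_adj_closed (P := π.SameCycle a) (.refl π a)
      (fun u v hu huv ↦ hu.trans (by_contra fun h' ↦ hno u v h' huv)) b
  by_cases h3 : ∀ v, π (π v) ≠ v
  · have htw := h.twins_of_long hsq hdeg hconn h3 hxy hadj
    refine SimpleGraph.isHamiltonian_of_twins (τ := fun v ↦ π (π v)) hconn hcard hdeg
      (fun v ↦ (htw v).1) h3 (fun v ↦ (htw v).2.1) fun v ↦ ?_
    obtain ⟨-, -, w, hvw, hadjw⟩ := htw v
    refine ⟨π v, w, h.adj v, hadjw, ?_, ?_⟩ <;> rintro rfl <;>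
      exact hvw (by simp [Equiv.Perm.SameCycle.refl])
  · push Not at h3
    obtain ⟨v, hv⟩ := h3
    have h2 : ∀ u, π (π u) = u :=
      hconn.forall_of_adj_closed hv fun u w hu huw ↦ h.apply_apply_of_adj hsq hdeg hu huw
    exact (h.false_of_involutive hsq hdeg h2 hxy hadj).elim
end
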